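/- arXiv:2408.12000 — 2 statements merged into one kernel-verified Lean document; each statement's English description precedes it below -/
import Mathlib

section
/- (Taylor's Gevrey criterion.) Let X be a complex Banach space and let S : [0, ∞) → B(X) be a strongly continuous semigroup (S(0) = I, S(t+s) = S(t)S(s), and t ↦ S(t)x is continuous for every x ∈ X) satisfying ‖S(t)‖ ≤ M e^(ωt) for all t ≥ 0. Let A be its infinitesimal generator, i.e., the linear operator with domain D(A) = {x ∈ X : the limit lim_{h→0⁺} (S(h)x − x)/h exists} and Ax equal to that limit. Suppose that for some μ ≥ ω and α ∈ (0, 1], every λ = μ + iβ with β real lies in the resolvent set of A and limsup_{|β|→∞} |β|^α · ‖R(μ + iβ; A)‖ = C < ∞, where R(λ; A) = (λI − A)⁻¹ ∈ B(X). Then for every δ > 1/α, the semigroup S(t) is of Gevrey class δ for t > 0. -/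
/-- A strongly continuous semigroup `S` (as an operator-valued function of time) is of
Gevrey class `δ` for `t > t₀`: `S` is infinitely differentiable in operator norm on
`(t₀, ∞)` and on every compact `K ⊆ (t₀, ∞)`, for every `θ > 0` there is `C > 0` with
`‖S⁽ⁿ⁾(t)‖ ≤ C θⁿ (n!)^δ` for all `t ∈ K` and all `n`. -/
def IsGevreyClass {X : Type*} [NormedAddCommGroup X] [NormedSpace ℂ X]
    (S : ℝ → X →L[ℂ] X) (δ : ℝ) (t₀ : ℝ) : Prop :=
  ContDiffOn ℝ (⊤ : ℕ∞) S (Set.Ioi t₀) ∧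
  ∀ K : Set ℝ, K ⊆ Set.Ioi t₀ → IsCompact K → ∀ θ : ℝ, 0 < θ →
    ∃ C > 0, ∀ t ∈ K, ∀ n : ℕ,
      ‖iteratedDerivWithin n S (Set.Ioi t₀) t‖ ≤ C * θ ^ n * (n.factorial : ℝ) ^ δ

open MeasureTheory Set Filter Topology

namespace TG

section semigroup
variable {X : Type*} [NormedAddCommGroup X] [NormedSpace ℂ X]

/-- The integrand `t^n e^{-iβt} T(t) x`. -/
noncomputable def kint (T : ℝ → X →L[ℂ] X) (n : ℕ) (β : ℝ) (x : X) (t : ℝ) : X :=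
  ((t : ℂ) ^ n * Complex.exp (-(β * t) * Complex.I)) • T t x

/-- Exponentially stable semigroup, extended continuously to the whole line. -/
structure Good (T : ℝ → X →L[ℂ] X) (M : ℝ) : Prop where
  cont : ∀ x, Continuous fun t => T t x
  zero : ∀ x, T 0 x = x
  add : ∀ t s, 0 ≤ t → 0 ≤ s → ∀ x, T (t + s) x = T t (T s x)
  bd : ∀ t, 0 ≤ t → ‖T t‖ ≤ M * Real.exp (-t)

variable {T : ℝ → X →L[ℂ] X} {M : ℝ}

lemma norm_phase (β t : ℝ) : ‖Complex.exp (-(β * t) * Complex.I)‖ = 1 := by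
  have := Complex.norm_exp_ofReal_mul_I (-(β * t))
  push_cast at this
  exact this

lemma Good.M_nonneg (h : Good T M) : 0 ≤ M := by
  have := (norm_nonneg _).trans (h.bd 0 le_rfl)
  simpa using this

lemma Good.kint_cont (h : Good T M) (n : ℕ) (β : ℝ) (x : X) : Continuous (kint T n β x) := by
  unfold kint
  exact Continuous.smul (by fun_prop) (h.cont x)

lemma Good.norm_kint_le (h : Good T M) (n : ℕ) (β : ℝ) (x : X) {t : ℝ} (ht : 0 ≤ t) :
    ‖kint T n β x t‖ ≤ (t ^ n * Real.exp (-t)) * (M * ‖x‖) := by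
  unfold kint
  rw [norm_smul, norm_mul, norm_phase, norm_pow, Complex.norm_real, Real.norm_of_nonneg ht]
  have h1 := ((T t).le_opNorm x).trans (mul_le_mul_of_nonneg_right (h.bd t ht) (norm_nonneg x))
  calc t ^ n * 1 * ‖T t x‖ ≤ t ^ n * 1 * (M * Real.exp (-t) * ‖x‖) := by gcongr
    _ = _ := by ring

lemma integrable_gamma (n : ℕ) :
    IntegrableOn (fun t : ℝ => t ^ n * Real.exp (-t)) (Ioi 0) := by
  have := Real.GammaIntegral_convergent (s := n + 1) (by positivity)
  refine this.congr_fun (fun t ht => ?_) measurableSet_Ioi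
  simp only [add_sub_cancel_right, Real.rpow_natCast]
  ring

lemma Good.kint_int (h : Good T M) (n : ℕ) (β : ℝ) (x : X) :
    IntegrableOn (kint T n β x) (Ioi 0) := by
  refine Integrable.mono' ((integrable_gamma n).mul_const (M * ‖x‖))
    (h.kint_cont n β x).aestronglyMeasurable ?_
  refine (ae_restrict_iff' measurableSet_Ioi).2 (Eventually.of_forall fun t ht => ?_)
  exact h.norm_kint_le n β x (le_of_lt ht)

/-- Laplace transform along the imaginary axis. -/
noncomputable def lap (T : ℝ → X →L[ℂ] X) (n : ℕ) (β : ℝ) (x : X) : X :=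
  ∫ t in Ioi (0 : ℝ), kint T n β x t

lemma Good.norm_lap_le (h : Good T M) (β : ℝ) (x : X) : ‖lap T 0 β x‖ ≤ M * ‖x‖ := by
  unfold lap
  calc ‖∫ t in Ioi (0 : ℝ), kint T 0 β x t‖
      ≤ ∫ t in Ioi (0 : ℝ), Real.exp (-t) * (M * ‖x‖) := by
        refine norm_integral_le_of_norm_le ?_ ?_
        · simpa using (integrable_gamma 0).mul_const (M * ‖x‖)
        · refine (ae_restrict_iff' measurableSet_Ioi).2 (Eventually.of_forall fun t ht => ?_)
          simpa using h.norm_kint_le 0 β x (le_of_lt ht)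
    _ = M * ‖x‖ := by
        rw [integral_mul_const, integral_exp_neg_Ioi_zero, one_mul]

lemma Good.lap_lip (h : Good T M) (β γ : ℝ) (x : X) :
    ‖lap T 0 β x - lap T 0 γ x‖ ≤
      |β - γ| * (∫ t in Ioi (0 : ℝ), t * Real.exp (-t)) * M * ‖x‖ := by
  unfold lap
  rw [← integral_sub (h.kint_int 0 β x) (h.kint_int 0 γ x)]
  calc _ ≤ ∫ t in Ioi (0 : ℝ), (t * Real.exp (-t)) * (|β - γ| * (M * ‖x‖)) := by
        refine norm_integral_le_of_norm_le ?_ ?_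
        · simpa using (integrable_gamma 1).mul_const (|β - γ| * (M * ‖x‖))
        · refine (ae_restrict_iff' measurableSet_Ioi).2 (Eventually.of_forall fun t ht => ?_)
          have ht0 : (0:ℝ) ≤ t := le_of_lt ht
          have e1 : kint T 0 β x t - kint T 0 γ x t =
              (Complex.exp (-(γ * t) * Complex.I) *
                (Complex.exp (Complex.I * ((-(β - γ) * t : ℝ) : ℂ)) - 1)) • T t x := by
            unfold kint
            rw [← sub_smul]
            congr 1
            rw [mul_sub, ← Complex.exp_add]
            push_cast
            simp only [pow_zero, one_mul, mul_one]
            congr 2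
            ring
          rw [e1, norm_smul, norm_mul, norm_phase, one_mul]
          have h1 := ((T t).le_opNorm x).trans
            (mul_le_mul_of_nonneg_right (h.bd t ht0) (norm_nonneg x))
          have h2 := Real.norm_exp_I_mul_ofReal_sub_one_le (x := -(β - γ) * t)
          rw [norm_mul, norm_neg, Real.norm_eq_abs, Real.norm_of_nonneg ht0] at h2
          calc _ ≤ (|β - γ| * t) * (M * Real.exp (-t) * ‖x‖) := by gcongr
            _ = _ := by ring
    _ = _ := by rw [integral_mul_const]; ring

lemma Good.lap_clm (h : Good T M) : ∃ L : ℝ → X →L[ℂ] X,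
    (∀ β x, L β x = lap T 0 β x) ∧ (∀ β, ‖L β‖ ≤ M) ∧ Continuous L := by
  let L : ℝ → X →L[ℂ] X := fun β => LinearMap.mkContinuous
    { toFun := fun x => lap T 0 β x
      map_add' := fun x y => by
        unfold lap
        rw [← integral_add (h.kint_int 0 β x) (h.kint_int 0 β y)]
        simp [kint]
      map_smul' := fun c x => by
        unfold lap
        rw [RingHom.id_apply, ← integral_smul]
        congr 1
        ext t
        simp only [kint, map_smul]
        rw [smul_comm] } M (fun x => h.norm_lap_le β x)
  have hL : ∀ β x, L β x = lap T 0 β x := fun β x => rfl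
  refine ⟨L, hL, fun β => LinearMap.mkContinuous_norm_le _ h.M_nonneg _, ?_⟩
  have hpos : 0 ≤ (∫ t in Ioi (0 : ℝ), t * Real.exp (-t)) * M := by
    refine mul_nonneg (setIntegral_nonneg measurableSet_Ioi fun t ht => ?_) h.M_nonneg
    exact mul_nonneg (le_of_lt ht) (Real.exp_pos _).le
  refine (LipschitzWith.of_dist_le_mul (K := ⟨_, hpos⟩) fun β γ => ?_).continuous
  rw [dist_eq_norm, Real.dist_eq]
  refine ContinuousLinearMap.opNorm_le_bound _ (mul_nonneg hpos (abs_nonneg _)) fun x => ?_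
  rw [sub_apply, hL, hL]
  refine (h.lap_lip β γ x).trans (le_of_eq ?_)
  change _ = ((∫ t in Ioi (0 : ℝ), t * Real.exp (-t)) * M) * |β - γ| * ‖x‖
  ring

lemma kint_pow (n : ℕ) (β : ℝ) (x : X) (t : ℝ) :
    kint T n β x t = (t ^ n : ℝ) • kint T 0 β x t := by
  simp only [kint, pow_zero, one_mul, mul_smul]
  rw [← Complex.coe_smul (t ^ n)]
  push_cast
  rfl

variable [CompleteSpace X]

lemma Good.shift (h : Good T M) (β : ℝ) (x : X) {t : ℝ} (ht : 0 ≤ t) :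
    kint T 0 β (lap T 0 β x) t = lap T 0 β x - ∫ s in (0:ℝ)..t, kint T 0 β x s := by
  have h1 : ∫ s in Ioi (0:ℝ), kint T 0 β x (s + t) = ∫ u in Ioi t, kint T 0 β x u := by
    have := (measurePreserving_add_right volume t).setIntegral_preimage_emb
      (measurableEmbedding_addRight t) (kint T 0 β x) (Ioi t)
    simpa using this
  have h2 := intervalIntegral.integral_interval_add_Ioi (h.kint_int 0 β x)
    ((h.kint_int 0 β x).mono_set (Ioi_subset_Ioi ht))
  have h3 : lap T 0 β x - ∫ s in (0:ℝ)..t, kint T 0 β x s = ∫ u in Ioi t, kint T 0 β x u := by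
    unfold lap
    rw [← h2]
    abel
  rw [h3, ← h1]
  conv_lhs => unfold kint lap
  rw [← ContinuousLinearMap.integral_comp_comm (T t) (h.kint_int 0 β x), ← integral_smul]
  refine setIntegral_congr_fun measurableSet_Ioi fun s hs => ?_
  have hs0 : (0:ℝ) ≤ s := le_of_lt hs
  simp only [kint, map_smul, pow_zero, one_mul]
  rw [smul_smul, ← Complex.exp_add, add_comm s t, h.add t s ht hs0]
  congr 2
  push_cast
  ring

lemma Good.hasDeriv_W (h : Good T M) (β : ℝ) (x : X) (t : ℝ) :
    HasDerivAt (fun t => lap T 0 β x - ∫ s in (0:ℝ)..t, kint T 0 β x s)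
      (-kint T 0 β x t) t := by
  have := (intervalIntegral.integral_hasDerivAt_right
    ((h.kint_cont 0 β x).intervalIntegrable 0 t)
    ((h.kint_cont 0 β x).stronglyMeasurableAtFilter _ _)
    (h.kint_cont 0 β x).continuousAt)
  simpa using this.const_sub (lap T 0 β x)

lemma Good.lap_succ (h : Good T M) (n : ℕ) (β : ℝ) (x : X) :
    lap T (n + 1) β x = ((n : ℝ) + 1) • lap T n β (lap T 0 β x) := by
  set y := lap T 0 β x with hy
  let W : ℝ → X := fun t => lap T 0 β x - ∫ s in (0:ℝ)..t, kint T 0 β x s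
  have hW : ∀ t, 0 ≤ t → W t = kint T 0 β y t := fun t ht => (h.shift β x ht).symm
  have hd : ∀ t, HasDerivAt (fun t : ℝ => t ^ (n + 1) • W t)
      (t ^ (n + 1) • (-kint T 0 β x t) + (((n + 1 : ℕ) : ℝ) * t ^ n) • W t) t := fun t => by
    have := (hasDerivAt_pow (n + 1) t).fun_smul (h.hasDeriv_W β x t)
    simpa using this
  have heq : EqOn (fun t : ℝ => ((n : ℝ) + 1) • kint T n β y t - kint T (n + 1) β x t)
     (fun t => (t ^ (n + 1) • (-kint T 0 β x t) + (((n + 1 : ℕ) : ℝ) * t ^ n) • W t)) (Ioi 0) := by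
    intro t ht
    simp only [kint_pow n, kint_pow (n + 1), hW t (le_of_lt ht), mul_smul, smul_neg]
    push_cast
    abel
  have hi1 : Integrable (fun t => ((n : ℝ) + 1) • kint T n β y t) (volume.restrict (Ioi 0)) :=
    (h.kint_int n β y).smul ((n : ℝ) + 1)
  have hint := hi1.sub (h.kint_int (n + 1) β x)
  have key := integral_Ioi_of_hasDerivAt_of_tendsto (a := 0) (m := 0)
    (hd 0).continuousAt.continuousWithinAt (fun t _ => hd t)
    (IntegrableOn.congr_fun hint heq measurableSet_Ioi) (by
      have hlim := (Real.tendsto_pow_mul_exp_neg_atTop_nhds_zero (n + 1)).mul_const (M * ‖y‖)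
      rw [zero_mul] at hlim
      refine squeeze_zero_norm' ?_ hlim
      filter_upwards [eventually_ge_atTop 0] with t ht
      rw [hW t ht, ← kint_pow]
      exact h.norm_kint_le (n + 1) β y ht)
  rw [← setIntegral_congr_fun measurableSet_Ioi heq, integral_sub hi1
    (h.kint_int (n + 1) β x)] at key
  simp only [integral_smul, ne_eq, Nat.add_eq_zero_iff, one_ne_zero, and_false, not_false_eq_true,
    zero_pow, zero_smul, sub_zero] at key
  exact (sub_eq_zero.1 key).symm

lemma Good.lap_eq (h : Good T M) {L : ℝ → X →L[ℂ] X} (hL : ∀ β x, L β x = lap T 0 β x)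
    (n : ℕ) (β : ℝ) (x : X) : lap T n β x = (n.factorial : ℝ) • (L β ^ (n + 1)) x := by
  induction n generalizing x with
  | zero => simp [hL]
  | succ n ih =>
    rw [h.lap_succ, ih, smul_smul, Nat.factorial_succ, pow_succ _ (n + 1),
      mul_apply_eq_comp, hL]
    push_cast
    rfl

lemma Good.gen (h : Good T M) (σ β : ℝ) (x : X) :
    Tendsto (fun r : ℝ => r⁻¹ • (Real.exp (σ * r) • T r (lap T 0 β x) - lap T 0 β x))
      (𝓝[>] 0) (𝓝 (((σ : ℂ) + Complex.I * β) • lap T 0 β x - x)) := by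
  set y := lap T 0 β x with hy
  let W : ℝ → X := fun t => lap T 0 β x - ∫ s in (0:ℝ)..t, kint T 0 β x s
  have hW : ∀ t, 0 ≤ t → W t = kint T 0 β y t := fun t ht => (h.shift β x ht).symm
  have hW0 : W 0 = y := by simp [W, hy]
  have hWd : HasDerivAt W (-x) 0 := by
    have e : kint T 0 β x 0 = x := by simp [kint, h.zero]
    have := h.hasDeriv_W β x 0
    rwa [e] at this
  have he : HasDerivAt (fun r : ℝ => Complex.exp (((σ : ℂ) + Complex.I * β) * r))
      ((σ : ℂ) + Complex.I * β) 0 := by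
    have h1 : HasDerivAt (fun z : ℂ => Complex.exp (((σ : ℂ) + Complex.I * β) * z))
      ((σ : ℂ) + Complex.I * β) ((0 : ℝ) : ℂ) := by
      have := ((hasDerivAt_id ((0 : ℝ) : ℂ)).const_mul ((σ : ℂ) + Complex.I * β)).cexp
      simpa using this
    exact h1.comp_ofReal
  have hd := he.fun_smul hWd
  have hs := (hasDerivAt_iff_tendsto_slope.1 hd).mono_left
    (nhdsWithin_mono 0 (fun r (hr : r ∈ Ioi (0:ℝ)) => ne_of_gt hr))
  simp only [hW0, Complex.ofReal_zero, mul_zero, Complex.exp_zero, one_smul] at hs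
  have hlim : -x + ((σ : ℂ) + Complex.I * β) • y = ((σ : ℂ) + Complex.I * β) • y - x := by abel
  rw [hlim] at hs
  refine hs.congr' ?_
  filter_upwards [self_mem_nhdsWithin] with r hr
  simp only [slope, vsub_eq_sub, sub_zero, hW0, Complex.ofReal_zero, mul_zero, Complex.exp_zero,
    one_smul]
  rw [hW r (le_of_lt hr)]
  congr 2
  simp only [kint, pow_zero, one_mul, smul_smul, ← Complex.exp_add]
  rw [← Complex.coe_smul (Real.exp (σ * r))]
  congr 1
  push_cast
  congr 1
  ring

open scoped FourierTransform

lemma Good.inversion (h : Good T M) {L : ℝ → X →L[ℂ] X} (hL : ∀ β x, L β x = lap T 0 β x)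
    (hLc : Continuous L) {K α : ℝ}
    (hK : ∀ ξ : ℝ, ‖L (2 * Real.pi * ξ)‖ ≤ K * (1 + ‖ξ‖) ^ (-α))
    (n m : ℕ) (hn : 1 ≤ n) (hnm : (m : ℝ) + 1 < α * (n + 1)) :
    ∃ U : ℝ → X →L[ℂ] X, ContDiff ℝ m U ∧ (∀ t ≤ 0, U t = 0) ∧
      (∀ t, 0 ≤ t → U t = (t ^ n) • T t) := by
  let Φ : ℝ → X →L[ℂ] X := fun ξ => (n.factorial : ℝ) • L (2 * Real.pi * ξ) ^ (n + 1)
  have hΦc : Continuous Φ := by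
    have : Continuous fun ξ : ℝ => L (2 * Real.pi * ξ) := hLc.comp (by fun_prop)
    exact (this.pow (n + 1)).const_smul (n.factorial : ℝ)
  have hΦb : ∀ ξ, ‖Φ ξ‖ ≤ (n.factorial * K ^ (n + 1)) * (1 + ‖ξ‖) ^ (-(α * (n + 1))) := by
    intro ξ
    have hp : (0:ℝ) < 1 + ‖ξ‖ := by positivity
    calc ‖Φ ξ‖ ≤ n.factorial * ‖L (2 * Real.pi * ξ)‖ ^ (n + 1) := by
          simp only [Φ]
          rw [norm_smul, Real.norm_natCast]
          gcongr
          exact norm_pow_le' _ (Nat.succ_pos n)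
      _ ≤ n.factorial * (K * (1 + ‖ξ‖) ^ (-α)) ^ (n + 1) := by
          gcongr
          exact hK ξ
      _ = _ := by
          rw [mul_pow, ← Real.rpow_natCast ((1 + ‖ξ‖) ^ (-α)), ← Real.rpow_mul hp.le]
          push_cast
          ring_nf
  have hint : ∀ k : ℕ, k ≤ m → Integrable (fun ξ : ℝ => ξ ^ k • Φ ξ) := by
    intro k hk
    have h1 : Integrable (fun ξ : ℝ => (1 + ‖ξ‖) ^ (-(α * (n + 1) - m))) :=
      integrable_one_add_norm (by simp; linarith)
    refine Integrable.mono' (h1.const_mul (n.factorial * K ^ (n + 1)))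
      ((by fun_prop : Continuous fun ξ : ℝ => ξ ^ k • Φ ξ).aestronglyMeasurable)
      (Eventually.of_forall fun ξ => ?_)
    have hp : (0:ℝ) < 1 + ‖ξ‖ := by positivity
    rw [norm_smul, norm_pow]
    calc ‖ξ‖ ^ k * ‖Φ ξ‖ ≤ (1 + ‖ξ‖) ^ m *
          ((n.factorial * K ^ (n + 1)) * (1 + ‖ξ‖) ^ (-(α * (n + 1)))) := by
          gcongr
          · calc ‖ξ‖ ^ k ≤ (1 + ‖ξ‖) ^ k := by gcongr; linarith
              _ ≤ (1 + ‖ξ‖) ^ m := pow_le_pow_right₀ (by linarith [norm_nonneg ξ]) hk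
          · exact hΦb ξ
      _ = _ := by
          have : -(α * (n + 1) - m) = (m : ℝ) + -(α * (n + 1)) := by ring
          rw [this, Real.rpow_add hp, Real.rpow_natCast]
          ring
  have hintΦ : Integrable Φ := by simpa using hint 0 (Nat.zero_le _)
  have hneg : ∀ k : ℕ, (k : ℕ∞) ≤ (m : ℕ∞) →
      Integrable (fun ξ : ℝ => ξ ^ k • Φ (-ξ)) := by
    intro k hk
    have h1 := ((hint k (by exact_mod_cast hk)).comp_neg).smul ((-1 : ℝ) ^ k)
    refine h1.congr (Eventually.of_forall fun ξ => ?_)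
    simp only [Pi.smul_apply, smul_smul, ← mul_pow]
    simp
  have hnegn : ∀ k : ℕ, (k : ℕ∞) ≤ (m : ℕ∞) →
      Integrable (fun ξ : ℝ => ‖ξ‖ ^ k * ‖Φ (-ξ)‖) := by
    intro k hk
    refine (hneg k hk).norm.congr (Eventually.of_forall fun ξ => ?_)
    simp [norm_smul]
  have hUT : ∀ t x, 𝓕⁻ Φ t x = ((max t 0) ^ n) • T t x := by
    intro t x
    let f : ℝ → X := fun t => ((max t 0) ^ n) • T t x
    have hmc : Continuous fun t : ℝ => (max t 0) ^ n := by fun_prop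
    have hfc : Continuous f := hmc.smul (h.cont x)
    have hf0 : ∀ t, t ∉ Ioi (0:ℝ) → f t = 0 := by
      intro t ht
      simp only [mem_Ioi, not_lt] at ht
      simp [f, max_eq_right ht, zero_pow (by omega : n ≠ 0)]
    have hf1 : ∀ t ∈ Ioi (0:ℝ), f t = kint T n 0 x t := by
      intro t ht
      rw [kint_pow]
      simp [f, kint, max_eq_left (le_of_lt (mem_Ioi.1 ht))]
    have hfi : Integrable f := by
      rw [← integrableOn_iff_integrable_of_support_subset (s := Ioi 0)]
      · exact (h.kint_int n 0 x).congr_fun (fun t ht => (hf1 t ht).symm) measurableSet_Ioi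
      · intro t ht
        by_contra hc
        exact ht (hf0 t hc)
    have hF : 𝓕 f = fun ξ => Φ ξ x := by
      ext ξ
      rw [Real.fourier_real_eq_integral_exp_smul]
      have e1 : Φ ξ x = lap T n (2 * Real.pi * ξ) x := by
        rw [h.lap_eq hL]; rfl
      rw [e1, lap, ← setIntegral_eq_integral_of_forall_compl_eq_zero (s := Ioi 0)]
      · refine setIntegral_congr_fun measurableSet_Ioi fun t ht => ?_
        simp only [hf1 t ht, kint, smul_smul]
        congr 1
        rw [mul_left_comm, ← Complex.exp_add]
        congr 2
        push_cast
        ring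
      · intro t ht
        rw [hf0 t ht, smul_zero]
    have hFi : Integrable (𝓕 f) := by
      rw [hF]
      exact (ContinuousLinearMap.apply ℂ X x).integrable_comp hintΦ
    have hinv := congrFun (hfc.fourierInv_fourier_eq hfi hFi) t
    rw [hF] at hinv
    change _ = f t
    rw [← hinv, Real.fourierInv_eq', Real.fourierInv_eq', ContinuousLinearMap.integral_apply]
    · rfl
    · refine hintΦ.norm.mono' (Continuous.aestronglyMeasurable ?_) (Eventually.of_forall fun v => ?_)
      · have hec : Continuous fun v : ℝ =>
            Complex.exp (((2 * Real.pi * inner ℝ v t : ℝ) : ℂ) * Complex.I) := by fun_prop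
        exact hec.smul hΦc
      · rw [norm_smul, Complex.norm_exp_ofReal_mul_I, one_mul]
  refine ⟨𝓕⁻ Φ, ?_, ?_, ?_⟩
  · rw [Real.fourierInv_eq_fourier_comp_neg]
    exact Real.contDiff_fourier (N := (m : ℕ∞)) hnegn
  · intro t ht
    ext x
    rw [hUT, max_eq_right ht, zero_pow (by omega), zero_smul]
    rfl
  · intro t ht
    ext x
    rw [hUT, max_eq_left ht]
    rfl

end semigroup

section calculus
variable {E : Type*} [NormedAddCommGroup E] [NormedSpace ℝ E]

lemma iter_hasDeriv {m : ℕ} {U : ℝ → E} (hU : ContDiff ℝ m U) {j : ℕ} (hj : j < m) (t : ℝ) :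
    HasDerivAt (iteratedDeriv j U) (iteratedDeriv (j + 1) U t) t := by
  rw [iteratedDeriv_succ]
  exact (hU.differentiable_iteratedDeriv j (by exact_mod_cast hj) t).hasDerivAt

lemma iter_zero {m : ℕ} {U : ℝ → E} (hU : ContDiff ℝ m U) (h0 : ∀ t ≤ 0, U t = 0)
    (j : ℕ) (hj : j ≤ m) : ∀ t ≤ 0, iteratedDeriv j U t = 0 := by
  induction j with
  | zero => simpa using h0
  | succ j ih =>
    intro t ht
    have h1 := (iter_hasDeriv hU (by omega : j < m) t).hasDerivWithinAt (s := Iic t)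
    have h2 : HasDerivWithinAt (iteratedDeriv j U) 0 (Iic t) t :=
      (hasDerivWithinAt_const t (Iic t) (0 : E)).congr
        (fun s hs => ih (by omega) s (le_trans hs ht)) (ih (by omega) t ht)
    exact (uniqueDiffOn_Iic t t (mem_Iic.2 le_rfl)).eq_deriv _ h1 h2

lemma taylor_vanish {m : ℕ} {U : ℝ → E} (hU : ContDiff ℝ m U) (h0 : ∀ t ≤ 0, U t = 0) :
    ∃ D, 0 ≤ D ∧ ∀ i j : ℕ, i + j = m → ∀ t ∈ Icc (0:ℝ) 1,
      ‖iteratedDeriv j U t‖ ≤ D * t ^ i := by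
  obtain ⟨D, hD⟩ := isCompact_Icc.exists_bound_of_continuousOn (s := Icc (0:ℝ) 1)
    (hU.continuous_iteratedDeriv m le_rfl).continuousOn
  have hD0 : 0 ≤ D := (norm_nonneg _).trans (hD 0 ⟨le_rfl, zero_le_one⟩)
  refine ⟨D, hD0, fun i => ?_⟩
  induction i with
  | zero =>
    intro j hj t ht
    obtain rfl : j = m := by omega
    simpa using hD t ht
  | succ i ih =>
    intro j hj t ht
    have key := norm_image_sub_le_of_norm_deriv_le_segment' (a := 0) (b := t)
      (f := iteratedDeriv j U) (f' := iteratedDeriv (j + 1) U) (C := D * t ^ i)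
      (fun s _ => (iter_hasDeriv hU (by omega) s).hasDerivWithinAt)
      (fun s hs => (ih (j + 1) (by omega) s ⟨hs.1, hs.2.le.trans ht.2⟩).trans (by
        have := hs.1
        have := hs.2.le
        gcongr)) t ⟨ht.1, le_rfl⟩
    rw [iter_zero hU h0 j (by omega) 0 le_rfl, sub_zero, sub_zero] at key
    rw [pow_succ, ← mul_assoc]
    exact key

lemma leibniz_bound {m : ℕ} (n : ℕ) {U : ℝ → E} (hU : ContDiff ℝ m U)
    (h0 : ∀ t ≤ 0, U t = 0) :
    ∃ C, 0 ≤ C ∧ ∀ t ∈ Ioc (0:ℝ) 1,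
      ‖iteratedDerivWithin m (fun t : ℝ => t ^ (-(n : ℤ)) • U t) (Ioi 0) t‖ ≤ C * (t ^ n)⁻¹ := by
  obtain ⟨D, hD0, hD⟩ := taylor_vanish hU h0
  let c : ℕ → ℝ := fun i => ∏ l ∈ Finset.range i, (((-(n : ℤ) : ℤ) : ℝ) - l)
  refine ⟨∑ i ∈ Finset.range (m + 1), (m.choose i : ℝ) * |c i| * D,
    Finset.sum_nonneg fun i _ => by positivity, fun t ht => ?_⟩
  have hz : ContDiffOn ℝ m (fun t : ℝ => t ^ (-(n : ℤ))) (Ioi 0) := by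
    intro s hs
    have hs' : s ≠ 0 := ne_of_gt hs
    have : ContDiffAt ℝ m (fun t : ℝ => (t ^ n)⁻¹) s :=
      (contDiffAt_id.pow n).inv (pow_ne_zero _ hs')
    simpa using this.contDiffWithinAt
  have key := norm_iteratedFDerivWithin_smul_le hz hU.contDiffOn (uniqueDiffOn_Ioi 0)
    (mem_Ioi.2 ht.1) (n := m) le_rfl
  simp only [norm_iteratedFDerivWithin_eq_norm_iteratedDerivWithin] at key
  refine key.trans ?_
  rw [Finset.sum_mul]
  refine Finset.sum_le_sum fun i hi => ?_
  have hi' : i ≤ m := by simpa [Nat.lt_succ_iff] using hi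
  rw [iteratedDerivWithin_of_isOpen isOpen_Ioi (mem_Ioi.2 ht.1),
    iteratedDerivWithin_of_isOpen isOpen_Ioi (mem_Ioi.2 ht.1), iteratedDeriv_eq_iterate,
    iter_deriv_zpow]
  have h1 := hD i (m - i) (by omega) t ⟨ht.1.le, ht.2⟩
  have ht0 : t ≠ 0 := ne_of_gt ht.1
  have h2 : t ^ (-(n : ℤ) - i) * t ^ i = (t ^ n)⁻¹ := by
    rw [zpow_sub₀ ht0, zpow_neg, zpow_natCast, zpow_natCast]
    field_simp
  have htp : 0 < t ^ (-(n : ℤ) - i) := zpow_pos ht.1 _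
  rw [norm_mul, Real.norm_eq_abs, Real.norm_of_nonneg htp.le]
  calc _ ≤ (m.choose i : ℝ) * (|c i| * t ^ (-(n : ℤ) - i)) * (D * t ^ i) := by gcongr
    _ = (m.choose i : ℝ) * |c i| * D * (t ^ (-(n : ℤ) - i) * t ^ i) := by ring
    _ = _ := by rw [h2]

end calculus

section gev
variable {X : Type*} [NormedAddCommGroup X] [NormedSpace ℂ X]

lemma deriv_mul {d : ℕ → ℝ → X →L[ℂ] X}
    (hd : ∀ i, ∀ t, 0 < t → HasDerivAt (d i) (d (i + 1) t) t)
    (h0 : ∀ t s, 0 < t → 0 < s → d 0 (t + s) = d 0 t * d 0 s) (i j : ℕ) :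
    ∀ t s, 0 < t → 0 < s → d (i + j) (t + s) = d i t * d j s := by
  have h1 : ∀ i, ∀ t s, 0 < t → 0 < s → d i (t + s) = d i t * d 0 s := by
    intro i
    induction i with
    | zero => exact h0
    | succ i ih =>
      intro t s ht hs
      have e1 : HasDerivAt (fun t => d i (t + s)) (d (i + 1) (t + s)) t :=
        (hd i (t + s) (by linarith)).comp_add_const t s
      have e2 : HasDerivAt (fun t => d i t * d 0 s) (d (i + 1) t * d 0 s) t :=
        (hd i t ht).mul_const (d 0 s)
      refine e1.unique (e2.congr_of_eventuallyEq ?_)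
      filter_upwards [lt_mem_nhds ht] with u hu using ih u s hu hs
  induction j with
  | zero => exact h1 i
  | succ j ih =>
    intro t s ht hs
    have e1 : HasDerivAt (fun s => d (i + j) (t + s)) (d (i + j + 1) (t + s)) s :=
      (hd (i + j) (t + s) (by linarith)).comp_const_add t s
    have e2 : HasDerivAt (fun s => d i t * d j s) (d i t * d (j + 1) s) s :=
      (hd j s hs).const_mul (d i t)
    refine e1.unique (e2.congr_of_eventuallyEq ?_)
    filter_upwards [lt_mem_nhds hs] with u hu using ih t u ht hu

lemma fact_pow_le (k m : ℕ) : (k.factorial) ^ m ≤ (m * k).factorial := by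
  induction m with
  | zero => simp
  | succ m ih =>
    calc k.factorial ^ (m + 1) = k.factorial ^ m * k.factorial := pow_succ _ _
      _ ≤ (m * k).factorial * k.factorial := Nat.mul_le_mul_right _ ih
      _ ≤ (m * k + k).factorial := Nat.le_of_dvd (Nat.factorial_pos _)
          (Nat.factorial_mul_factorial_dvd_factorial_add _ _)
      _ = _ := by rw [Nat.succ_mul]

lemma absorb (F p δ θ : ℝ) (hF : 0 < F) (hp : p < δ) (hθ : 0 < θ) :
    ∃ C, 0 < C ∧ ∀ j : ℕ, F ^ j * (j.factorial : ℝ) ^ p ≤ C * θ ^ j * (j.factorial : ℝ) ^ δ := by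
  have he : 0 < δ - p := by linarith
  obtain ⟨B, hB⟩ := (FloorSemiring.tendsto_pow_div_factorial_atTop
    ((F / θ) ^ (1 / (δ - p)))).bddAbove_range
  refine ⟨(max B 1) ^ (δ - p), by positivity, fun j => ?_⟩
  have hj : (0:ℝ) < j.factorial := by exact_mod_cast Nat.factorial_pos j
  have h1 : ((F / θ) ^ (1 / (δ - p))) ^ j ≤ max B 1 * j.factorial := by
    have := (hB (mem_range_self j)).trans (le_max_left B 1)
    rwa [div_le_iff₀ hj] at this
  have h2 := Real.rpow_le_rpow (by positivity) h1 he.le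
  rw [Real.mul_rpow (by positivity) hj.le, ← Real.rpow_natCast, ← Real.rpow_mul (by positivity),
    ← Real.rpow_mul (by positivity)] at h2
  have h3 : 1 / (δ - p) * (j : ℝ) * (δ - p) = j := by field_simp
  rw [mul_assoc] at h3
  rw [h3, Real.rpow_natCast, div_pow, div_le_iff₀ (by positivity)] at h2
  calc F ^ j * (j.factorial : ℝ) ^ p
      ≤ (max B 1) ^ (δ - p) * (j.factorial : ℝ) ^ (δ - p) * θ ^ j * (j.factorial : ℝ) ^ p := by
        gcongr
    _ = (max B 1) ^ (δ - p) * θ ^ j * ((j.factorial : ℝ) ^ (δ - p) * (j.factorial : ℝ) ^ p) := by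
        ring
    _ = _ := by
        rw [← Real.rpow_add hj]
        ring_nf

lemma gevrey_bound {d : ℕ → ℝ → X →L[ℂ] X}
    (hd : ∀ i, ∀ t, 0 < t → HasDerivAt (d i) (d (i + 1) t) t)
    (h0 : ∀ t s, 0 < t → 0 < s → d 0 (t + s) = d 0 t * d 0 s)
    {m n : ℕ} {δ C : ℝ} (hm : 0 < m) (hnm : (n : ℝ) < δ * m)
    (hC : ∀ t ∈ Ioc (0:ℝ) 1, ‖d m t‖ ≤ C * (t ^ n)⁻¹)
    {K : Set ℝ} (hK : K ⊆ Ioi 0) (hKc : IsCompact K) {θ : ℝ} (hθ : 0 < θ) :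
    ∃ B > 0, ∀ t ∈ K, ∀ j : ℕ, ‖d j t‖ ≤ B * θ ^ j * (j.factorial : ℝ) ^ δ := by
  have hsub : ∀ i j t s, 0 < t → 0 < s → ‖d (i + j) (t + s)‖ ≤ ‖d i t‖ * ‖d j s‖ := by
    intro i j t s ht hs
    rw [deriv_mul hd h0 i j t s ht hs]
    exact norm_mul_le _ _
  have hpow : ∀ k : ℕ, ∀ t, 0 < t → ‖d (m * (k + 1)) ((k + 1 : ℕ) * t)‖ ≤ ‖d m t‖ ^ (k + 1) := by
    intro k t ht
    induction k with
    | zero => simp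
    | succ k ih =>
      have := hsub (m * (k + 1)) m ((k + 1 : ℕ) * t) t (by positivity) ht
      have e : ((k + 1 : ℕ) * t + t) = ((k + 1 + 1 : ℕ) * t) := by push_cast; ring
      rw [e, ← Nat.mul_succ] at this
      refine this.trans ?_
      rw [pow_succ]
      gcongr
  -- a lower bound for `K`
  obtain ⟨a, ha0, ha1, haK⟩ : ∃ a : ℝ, 0 < a ∧ a ≤ 1 ∧ ∀ t ∈ K, a < t := by
    rcases K.eq_empty_or_nonempty with rfl | hne
    · exact ⟨1, one_pos, le_rfl, by simp⟩
    · obtain ⟨b, hb, hbK⟩ := hKc.exists_isLeast hne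
      have hb0 : 0 < b := hK hb
      refine ⟨min (b / 2) 1, by positivity, min_le_right _ _, fun t ht => ?_⟩
      have := hbK ht
      have := min_le_left (b / 2) 1
      linarith
  have hbr : ∀ r : ℕ, ∃ B, ∀ t ∈ K, ‖d r (t - a)‖ ≤ B := by
    intro r
    refine hKc.exists_bound_of_continuousOn (f := fun t => d r (t - a)) fun t ht => ?_
    have h1 : ContinuousAt (d r) (t - a) := (hd r (t - a) (by linarith [haK t ht])).continuousAt
    exact (ContinuousAt.comp (f := fun t => t - a) h1 (by fun_prop)).continuousWithinAt
  choose b hb using hbr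
  let Bs : ℝ := 1 + ∑ r ∈ Finset.range m, |b r|
  have hBs : ∀ r < m, ∀ t ∈ K, ‖d r (t - a)‖ ≤ Bs := by
    intro r hr t ht
    have := Finset.single_le_sum (f := fun r => |b r|) (fun _ _ => abs_nonneg _)
      (Finset.mem_range.2 hr)
    have h2 := (hb r t ht).trans (le_abs_self _)
    simp only [Bs]
    linarith
  have hBs0 : 0 < Bs := by positivity
  let E : ℝ := max 1 C * (a ^ n)⁻¹
  have hE1 : 1 ≤ E := by
    have : 1 ≤ (a ^ n)⁻¹ := (one_le_inv₀ (by positivity)).2 (pow_le_one₀ ha0.le ha1)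
    exact one_le_mul_of_one_le_of_one_le (le_max_left _ _) this
  let F : ℝ := E * Real.exp n
  have hF1 : 1 ≤ F := one_le_mul_of_one_le_of_one_le hE1 (Real.one_le_exp (by positivity))
  let p : ℝ := n / m
  have hm' : (0:ℝ) < m := by exact_mod_cast hm
  have hp0 : 0 ≤ p := by positivity
  have hpδ : p < δ := by
    simp only [p]
    rw [div_lt_iff₀ hm']
    exact hnm
  let G : ℝ := 1 + ‖d 0 a‖
  have hmk : ∀ k : ℕ, ‖d (m * k) a‖ ≤ G * (F ^ k * (k.factorial : ℝ) ^ n) := by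
    intro k
    rcases k with _ | k
    · simp [G]
    · have h1 := hpow k (a / (k + 1 : ℕ)) (by positivity)
      have e : ((k + 1 : ℕ) : ℝ) * (a / (k + 1 : ℕ)) = a := by
        field_simp
      rw [e] at h1
      have hk1 : (1:ℝ) ≤ (k + 1 : ℕ) := by push_cast; linarith [(Nat.cast_nonneg k : (0:ℝ) ≤ k)]
      have h2 := hC (a / (k + 1 : ℕ)) ⟨by positivity, (div_le_self ha0.le hk1).trans ha1⟩
      have h3 : ‖d m (a / (k + 1 : ℕ))‖ ≤ E * ((k + 1 : ℕ) : ℝ) ^ n := by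
        refine h2.trans ?_
        rw [div_pow, inv_div, div_eq_mul_inv]
        calc C * (((k + 1 : ℕ) : ℝ) ^ n * (a ^ n)⁻¹)
            ≤ max 1 C * (((k + 1 : ℕ) : ℝ) ^ n * (a ^ n)⁻¹) := by gcongr; exact le_max_right _ _
          _ = _ := by simp only [E]; ring
      have h4 : ((k + 1 : ℕ) : ℝ) ^ (k + 1) ≤ Real.exp (k + 1 : ℕ) * (k + 1).factorial := by
        have := Real.pow_div_factorial_le_exp ((k + 1 : ℕ) : ℝ) (by positivity) (k + 1)
        rwa [div_le_iff₀ (by positivity)] at this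
      have hG : 1 ≤ G := by simp only [G]; linarith [norm_nonneg (d 0 a)]
      calc ‖d (m * (k + 1)) a‖ ≤ ‖d m (a / (k + 1 : ℕ))‖ ^ (k + 1) := h1
        _ ≤ (E * ((k + 1 : ℕ) : ℝ) ^ n) ^ (k + 1) := by gcongr
        _ = E ^ (k + 1) * (((k + 1 : ℕ) : ℝ) ^ (k + 1)) ^ n := by
            rw [mul_pow, ← pow_mul, ← pow_mul, mul_comm n]
        _ ≤ E ^ (k + 1) * (Real.exp (k + 1 : ℕ) * (k + 1).factorial) ^ n := by gcongr
        _ = F ^ (k + 1) * ((k + 1).factorial : ℝ) ^ n := by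
            have e5 : Real.exp (k + 1 : ℕ) ^ n = Real.exp n ^ (k + 1) := by
              rw [← Real.exp_nat_mul, ← Real.exp_nat_mul, mul_comm (n : ℝ)]
            simp only [F]
            rw [mul_pow _ _ n, mul_pow _ _ (k + 1), e5]
            ring
        _ ≤ G * (F ^ (k + 1) * ((k + 1).factorial : ℝ) ^ n) :=
            le_mul_of_one_le_left (by positivity) hG
  have hfact : ∀ k j : ℕ, m * k ≤ j → (k.factorial : ℝ) ^ n ≤ (j.factorial : ℝ) ^ p := by
    intro k j hkj
    have h1 : ((k.factorial : ℝ)) ^ m ≤ j.factorial := by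
      exact_mod_cast (fact_pow_le k m).trans (Nat.factorial_le hkj)
    have h2 := Real.rpow_le_rpow (by positivity) h1 hp0
    refine le_trans (le_of_eq ?_) h2
    rw [← Real.rpow_natCast _ m, ← Real.rpow_mul (by positivity), ← Real.rpow_natCast]
    congr 1
    simp only [p]
    field_simp
  obtain ⟨A, hA0, hA⟩ := absorb F p δ θ (by positivity) hpδ hθ
  refine ⟨G * Bs * A, by positivity, fun t ht j => ?_⟩
  have hj : m * (j / m) + j % m = j := Nat.div_add_mod j m
  have hst := hsub (m * (j / m)) (j % m) a (t - a) ha0 (by linarith [haK t ht])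
  rw [hj, add_sub_cancel] at hst
  calc ‖d j t‖ ≤ ‖d (m * (j / m)) a‖ * ‖d (j % m) (t - a)‖ := hst
    _ ≤ (G * (F ^ (j / m) * ((j / m).factorial : ℝ) ^ n)) * Bs := by
        gcongr
        · exact hmk _
        · exact hBs _ (Nat.mod_lt _ hm) t ht
    _ ≤ (G * (F ^ j * (j.factorial : ℝ) ^ p)) * Bs := by
        gcongr
        · exact Nat.div_le_self j m
        · exact hfact _ _ (Nat.mul_div_le j m)
    _ ≤ (G * (A * θ ^ j * (j.factorial : ℝ) ^ δ)) * Bs := by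
        have := hA j
        gcongr
    _ = _ := by ring

end gev

end TG

/-- Taylor's Gevrey criterion: if a strongly continuous semigroup `S`
with `‖S(t)‖ ≤ M e^(ωt)` has generator `A` whose resolvent exists on the vertical line
`μ + iℝ` (for some `μ ≥ ω`) and satisfies
`limsup_{|β|→∞} |β|^α ‖R(μ+iβ;A)‖ = C < ∞` for some `α ∈ (0,1]`, then `S` is of
Gevrey class `δ` for `t > 0`, for every `δ > 1/α`. -/
theorem taylor_gevrey_criterion
    {X : Type*} [NormedAddCommGroup X] [NormedSpace ℂ X] [CompleteSpace X]
    (S : ℝ → X →L[ℂ] X)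
    (hS0 : S 0 = ContinuousLinearMap.id ℂ X)
    (hSadd : ∀ t s : ℝ, 0 ≤ t → 0 ≤ s → S (t + s) = (S t).comp (S s))
    (hScont : ∀ x : X, ContinuousOn (fun t => S t x) (Set.Ici (0 : ℝ)))
    (M ω : ℝ)
    (hbound : ∀ t : ℝ, 0 ≤ t → ‖S t‖ ≤ M * Real.exp (ω * t))
    (domA : Set X)
    (hdom : domA = {x : X | ∃ y : X,
      Filter.Tendsto (fun h : ℝ => h⁻¹ • (S h x - x))
        (nhdsWithin 0 (Set.Ioi 0)) (nhds y)})
    (A : X → X)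
    (hA : ∀ x ∈ domA,
      Filter.Tendsto (fun h : ℝ => h⁻¹ • (S h x - x))
        (nhdsWithin 0 (Set.Ioi 0)) (nhds (A x)))
    (μ α : ℝ) (hμ : ω ≤ μ) (hα : α ∈ Set.Ioc (0 : ℝ) 1)
    (R : ℝ → X →L[ℂ] X)
    (hR_left : ∀ β : ℝ, ∀ x ∈ domA,
      R β (((μ : ℂ) + Complex.I * (β : ℂ)) • x - A x) = x)
    (hR_right : ∀ β : ℝ, ∀ y : X,
      R β y ∈ domA ∧ ((μ : ℂ) + Complex.I * (β : ℂ)) • (R β y) - A (R β y) = y)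
    (C : ℝ)
    (hbdd : Filter.IsBoundedUnder (· ≤ ·) (Filter.atBot ⊔ Filter.atTop)
      (fun β : ℝ => |β| ^ α * ‖R β‖))
    (hlimsup : Filter.limsup (fun β : ℝ => |β| ^ α * ‖R β‖)
      (Filter.atBot ⊔ Filter.atTop) = C) :
    ∀ δ : ℝ, 1 / α < δ → IsGevreyClass S δ 0 := by
  intro δ hδ
  obtain ⟨hα0, hα1⟩ := hα
  have hM0 : 0 ≤ M := by
    have := (norm_nonneg _).trans (hbound 0 le_rfl)
    simpa using this
  let σ : ℝ := μ + 1
  let T : ℝ → X →L[ℂ] X := fun t => Real.exp (-(σ * t)) • S (max t 0)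
  have hT : TG.Good T M := by
    refine ⟨fun x => ?_, fun x => ?_, fun t s ht hs x => ?_, fun t ht => ?_⟩
    · have h1 : Continuous fun t : ℝ => S (max t 0) x :=
        (hScont x).comp_continuous (by fun_prop) (fun t => le_max_right t 0)
      have h2 : Continuous fun t : ℝ => Real.exp (-(σ * t)) := by fun_prop
      exact h2.smul h1
    · simp [T, hS0]
    · simp only [T, max_eq_left ht, max_eq_left hs, max_eq_left (add_nonneg ht hs), hSadd t s ht hs,
        smul_apply, ContinuousLinearMap.comp_apply]
      rw [ContinuousLinearMap.map_smul_of_tower, smul_smul, ← Real.exp_add]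
      congr 2
      ring
    · simp only [T, max_eq_left ht]
      rw [norm_smul, Real.norm_of_nonneg (Real.exp_pos _).le]
      calc Real.exp (-(σ * t)) * ‖S t‖ ≤ Real.exp (-(σ * t)) * (M * Real.exp (ω * t)) := by
            gcongr
            exact hbound t ht
        _ = M * Real.exp (-(σ * t) + ω * t) := by rw [Real.exp_add]; ring
        _ ≤ M * Real.exp (-t) := by
            gcongr
            simp only [σ]
            nlinarith
  have hTS : ∀ t, 0 ≤ t → Real.exp (σ * t) • T t = S t := by
    intro t ht
    simp only [T, max_eq_left ht, smul_smul, ← Real.exp_add]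
    simp
  obtain ⟨L, hL, hLM, hLc⟩ := hT.lap_clm
  -- the resolvent identity
  have hLR : ∀ β x, L β x = R β (x - L β x) := by
    intro β x
    have hg := hT.gen σ β x
    rw [← hL β x] at hg
    have hg' : Tendsto (fun h : ℝ => h⁻¹ • (S h (L β x) - L β x)) (𝓝[>] 0)
        (𝓝 (((σ : ℂ) + Complex.I * β) • L β x - x)) := by
      refine hg.congr' ?_
      filter_upwards [self_mem_nhdsWithin] with r hr
      rw [← hTS r (le_of_lt hr)]
      rfl
    have hmem : L β x ∈ domA := by
      rw [hdom]
      exact ⟨_, hg'⟩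
    have hAe := tendsto_nhds_unique (hA _ hmem) hg'
    have h1 := hR_left β _ hmem
    rw [hAe] at h1
    rw [← h1]
    congr 1
    rw [h1]
    simp only [σ]
    push_cast
    simp only [add_smul, one_smul]
    abel
  have hLnorm : ∀ β, ‖L β‖ ≤ ‖R β‖ * (1 + M) := by
    intro β
    refine ContinuousLinearMap.opNorm_le_bound _ (by positivity) fun x => ?_
    rw [hLR β x]
    calc ‖R β (x - L β x)‖ ≤ ‖R β‖ * ‖x - L β x‖ := (R β).le_opNorm _
      _ ≤ ‖R β‖ * (‖x‖ + M * ‖x‖) := by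
          gcongr
          refine (norm_sub_le _ _).trans ?_
          gcongr
          exact (L β).le_of_opNorm_le (hLM β) x
      _ = _ := by ring
  obtain ⟨b, hb⟩ := hbdd
  rw [eventually_map, eventually_sup] at hb
  obtain ⟨N1, hN1⟩ := eventually_atBot.1 hb.1
  obtain ⟨N2, hN2⟩ := eventually_atTop.1 hb.2
  let N : ℝ := max 1 (max (-N1) N2)
  have hN1' : 1 ≤ N := le_max_left _ _
  have hNb : ∀ β : ℝ, N ≤ |β| → |β| ^ α * ‖R β‖ ≤ b := by
    intro β hβ
    have e1 : -N1 ≤ N := (le_max_left _ _).trans (le_max_right _ _)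
    have e2 : N2 ≤ N := (le_max_right _ _).trans (le_max_right _ _)
    rcases le_total 0 β with h | h
    · rw [abs_of_nonneg h] at hβ
      exact hN2 β (by linarith)
    · rw [abs_of_nonpos h] at hβ
      exact hN1 β (by linarith)
  let K : ℝ := 2 ^ α * (1 + M) * |b| + (1 + N) ^ α * M
  have hK1 : ∀ ξ : ℝ, (1 + ‖ξ‖) ^ α * ‖L (2 * Real.pi * ξ)‖ ≤ K := by
    intro ξ
    have hle : ‖ξ‖ ≤ |2 * Real.pi * ξ| := by
      rw [abs_mul, abs_of_pos (by positivity : (0:ℝ) < 2 * Real.pi), Real.norm_eq_abs]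
      have := Real.pi_gt_three
      nlinarith [abs_nonneg ξ]
    have hp1 : 0 ≤ 2 ^ α * (1 + M) * |b| := by positivity
    have hp2 : 0 ≤ (1 + N) ^ α * M := by positivity
    rcases le_total N |2 * Real.pi * ξ| with h | h
    · calc (1 + ‖ξ‖) ^ α * ‖L (2 * Real.pi * ξ)‖
          ≤ (2 * |2 * Real.pi * ξ|) ^ α * (‖R (2 * Real.pi * ξ)‖ * (1 + M)) := by
            gcongr
            · linarith
            · exact hLnorm _
        _ = 2 ^ α * (1 + M) * (|2 * Real.pi * ξ| ^ α * ‖R (2 * Real.pi * ξ)‖) := by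
            rw [Real.mul_rpow (by norm_num) (abs_nonneg _)]
            ring
        _ ≤ 2 ^ α * (1 + M) * |b| := by
            gcongr
            exact (hNb _ h).trans (le_abs_self b)
        _ ≤ K := by simp only [K]; linarith
    · calc (1 + ‖ξ‖) ^ α * ‖L (2 * Real.pi * ξ)‖ ≤ (1 + N) ^ α * M := by
            gcongr
            · linarith
            · exact hLM _
        _ ≤ K := by simp only [K]; linarith
  have hK : ∀ ξ : ℝ, ‖L (2 * Real.pi * ξ)‖ ≤ K * (1 + ‖ξ‖) ^ (-α) := by
    intro ξ
    have hp : (0:ℝ) < 1 + ‖ξ‖ := by positivity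
    rw [Real.rpow_neg hp.le, ← div_eq_mul_inv, le_div_iff₀ (by positivity), mul_comm]
    exact hK1 ξ
  -- regularity
  have hreg : ∀ m n : ℕ, 1 ≤ n → (m : ℝ) + 1 < α * (n + 1) →
      ∃ V : ℝ → X →L[ℂ] X, ContDiff ℝ m V ∧ (∀ t ≤ 0, V t = 0) ∧
        EqOn S (fun t : ℝ => t ^ (-(n : ℤ)) • V t) (Ioi 0) := by
    intro m n hn hmn
    obtain ⟨U, hU, hU0, hUT⟩ := hT.inversion hL hLc hK n m hn hmn
    refine ⟨fun t => Real.exp (σ * t) • U t, ?_, ?_, ?_⟩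
    · have he : ContDiff ℝ m fun t : ℝ => Real.exp (σ * t) := by fun_prop
      exact he.smul hU
    · intro t ht
      simp [hU0 t ht]
    · intro t ht
      have ht0 : t ^ n ≠ 0 := pow_ne_zero _ (ne_of_gt ht)
      simp only
      rw [hUT t (le_of_lt ht), smul_comm (Real.exp _), smul_smul, hTS t (le_of_lt ht), zpow_neg,
        zpow_natCast, inv_mul_cancel₀ ht0, one_smul]
  have hfl : ∀ m : ℕ, 1 ≤ ⌊((m : ℝ) + 1) / α⌋₊ ∧
      (m : ℝ) + 1 < α * ((⌊((m : ℝ) + 1) / α⌋₊ : ℝ) + 1) := by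
    intro m
    constructor
    · rw [Nat.one_le_floor_iff, le_div_iff₀ hα0]
      have : (0:ℝ) ≤ m := Nat.cast_nonneg m
      linarith
    · have := Nat.lt_floor_add_one (((m : ℝ) + 1) / α)
      rw [div_lt_iff₀ hα0] at this
      linarith
  have hsm : ∀ m : ℕ, ContDiffOn ℝ m S (Ioi 0) := by
    intro m
    obtain ⟨V, hV, -, hSV⟩ := hreg m _ (hfl m).1 (hfl m).2
    refine ContDiffOn.congr ?_ hSV
    suffices hz : ContDiffOn ℝ m (fun t : ℝ => t ^ (-(⌊((m : ℝ) + 1) / α⌋₊ : ℤ))) (Ioi 0) from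
      hz.smul hV.contDiffOn
    intro s hs
    have hs' : s ≠ 0 := ne_of_gt hs
    have : ContDiffAt ℝ m (fun t : ℝ => (t ^ ⌊((m : ℝ) + 1) / α⌋₊)⁻¹) s :=
      (contDiffAt_id.pow _).inv (pow_ne_zero _ hs')
    simpa using this.contDiffWithinAt
  have hSinf : ContDiffOn ℝ (⊤ : ℕ∞) S (Ioi 0) := contDiffOn_infty.2 hsm
  refine ⟨hSinf, fun K' hK' hKc θ hθ => ?_⟩
  have hd : ∀ i, ∀ t, 0 < t → HasDerivAt (iteratedDerivWithin i S (Ioi 0))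
      (iteratedDerivWithin (i + 1) S (Ioi 0) t) t := by
    intro i t ht
    have h1 := (hsm (i + 1)).differentiableOn_iteratedDerivWithin (m := i)
      (by exact_mod_cast Nat.lt_succ_self i) (uniqueDiffOn_Ioi 0) t ht
    rw [iteratedDerivWithin_succ]
    exact h1.hasDerivWithinAt.hasDerivAt (Ioi_mem_nhds ht)
  have hδ0 : 0 < δ - 1 / α := by linarith
  obtain ⟨m0, hm0⟩ := exists_nat_gt ((1 / α) / (δ - 1 / α))
  have hm0' : 0 < m0 := by
    have : (0:ℝ) < m0 := lt_of_le_of_lt (by positivity) hm0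
    exact_mod_cast this
  rw [div_lt_iff₀ hδ0] at hm0
  obtain ⟨V, hV, hV0, hSV⟩ := hreg m0 _ (hfl m0).1 (hfl m0).2
  obtain ⟨C', -, hC'⟩ := TG.leibniz_bound ⌊((m0 : ℝ) + 1) / α⌋₊ hV hV0
  refine TG.gevrey_bound hd ?_ hm0' (n := ⌊((m0 : ℝ) + 1) / α⌋₊) (C := C') ?_ ?_ hK' hKc hθ
  · intro t s ht hs
    simp only [iteratedDerivWithin_zero]
    exact hSadd t s ht.le hs.le
  · refine lt_of_le_of_lt (Nat.floor_le (by positivity)) ?_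
    have : ((m0 : ℝ) + 1) / α = m0 * (1 / α) + 1 / α := by ring
    rw [this]
    linarith
  · intro t ht
    rw [iteratedDerivWithin_congr hSV (mem_Ioi.2 ht.1)]
    exact hC' t ht
end

section
/- Let H be a complex Hilbert space and let A, with domain D(A) ⊆ H, be the infinitesimal generator of a strongly continuous semigroup of contractions S(t) on H (‖S(t)‖ ≤ 1 for all t ≥ 0). Fix ε ∈ (0, 1/8), C₀ > 0 and β₀ ≥ 1, and suppose: (i) Re⟨Ax, x⟩ ≤ 0 for all x ∈ D(A); (ii) |Im⟨Ax, x⟩| ≤ C₀ · ‖Ax‖^(3/4 + 2ε) · ‖x‖^(1/4 − 2ε) · (−Re⟨Ax, x⟩)^(1/2) for all x ∈ D(A); and (iii) iβ lies in the resolvent set of A for every real β with |β| ≥ β₀. Then for every δ > 2/(1 − 8ε), the semigroup S(t) is of Gevrey class δ for t > 0. In particular, taking ε > 0 arbitrarily small, S(t) is of Gevrey class δ = 2 + ρ for every ρ > 0. -/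
lemma fsi_real_est (X Y b C0 ε Z D I : ℝ) (hX : 0 ≤ X) (hY : 0 ≤ Y) (hb : 1 ≤ b)
    (hC0 : 0 < C0) (hε : 0 < ε) (hε' : ε < 1/8) (hZ0 : 0 ≤ Z) (hD0 : 0 ≤ D)
    (hD : D ≤ Y * X) (hZ : Z ≤ b * X + Y)
    (hI : b * X ^ 2 ≤ I + Y * X)
    (hIc : I ≤ C0 * Z ^ ((3:ℝ)/4 + 2*ε) * X ^ ((1:ℝ)/4 - 2*ε) * D ^ ((1:ℝ)/2)) :
    X ≤ (2 + 4 * C0^2) * b ^ (-(1/2 - 4*ε)) * Y := by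
  have hb0 : 0 < b := by linarith
  have hbα : b⁻¹ ≤ b ^ (-(1/2 - 4*ε)) := by
    rw [← Real.rpow_neg_one]
    exact Real.rpow_le_rpow_of_exponent_le hb (by linarith)
  have hbp : 0 < b ^ (-(1/2 - 4*ε)) := Real.rpow_pos_of_pos hb0 _
  rcases le_or_gt (b * X) Y with h | h
  · have h1 : X ≤ b⁻¹ * Y := by
      rw [inv_mul_eq_div, le_div_iff₀ hb0]; linarith
    have h2 : b⁻¹ * Y ≤ b ^ (-(1/2 - 4*ε)) * Y := by gcongr
    have h3 : 0 ≤ b ^ (-(1/2 - 4*ε)) * Y := by positivity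
    nlinarith [sq_nonneg C0]
  · have hXpos : 0 < X := by
      by_contra hx
      have : X = 0 := le_antisymm (not_lt.mp hx) hX
      subst this; simp at h; linarith
    set q : ℝ := 3/4 + 2*ε with hq
    have hq1 : q ≤ 1 := by rw [hq]; linarith
    have e1 : Z ^ q ≤ 2 * b ^ q * X ^ q := by
      calc Z ^ q ≤ (2 * (b * X)) ^ q :=
            Real.rpow_le_rpow hZ0 (by linarith) (by rw [hq]; linarith)
        _ = 2 ^ q * (b ^ q * X ^ q) := by
            rw [Real.mul_rpow (by norm_num) (by positivity), Real.mul_rpow hb0.le hX]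
        _ ≤ 2 * (b ^ q * X ^ q) := by
            gcongr
            calc (2:ℝ) ^ q ≤ 2 ^ (1:ℝ) := Real.rpow_le_rpow_of_exponent_le (by norm_num) hq1
              _ = 2 := by simp
        _ = _ := by ring
    have e2 : D ^ ((1:ℝ)/2) ≤ √Y * √X := by
      rw [← Real.sqrt_eq_rpow, ← Real.sqrt_mul hY]
      exact Real.sqrt_le_sqrt hD
    have e3 : X ^ q * X ^ ((1:ℝ)/4 - 2*ε) = X := by
      rw [← Real.rpow_add hXpos, hq, show (3:ℝ)/4 + 2*ε + (1/4 - 2*ε) = 1 by ring, Real.rpow_one]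
    have e4 : I ≤ C0 * (2 * b ^ q * X) * (√Y * √X) := by
      refine hIc.trans ?_
      calc C0 * Z ^ q * X ^ ((1:ℝ)/4 - 2*ε) * D ^ ((1:ℝ)/2)
          ≤ C0 * (2 * b ^ q * X ^ q) * X ^ ((1:ℝ)/4 - 2*ε) * (√Y * √X) := by gcongr
        _ = C0 * (2 * b ^ q * (X ^ q * X ^ ((1:ℝ)/4 - 2*ε))) * (√Y * √X) := by ring
        _ = _ := by rw [e3]
    have e5 : b * X ≤ 2 * C0 * b ^ q * (√Y * √X) + Y := by
      have : X * (b * X) ≤ X * (2 * C0 * b ^ q * (√Y * √X) + Y) := by nlinarith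
      exact le_of_mul_le_mul_left this hXpos
    -- divide by b
    set p := b ^ (q - 1) with hp
    have e6 : b ^ q = b * p := by
      rw [hp, Real.rpow_sub hb0, Real.rpow_one]; field_simp
    have e7 : p ^ 2 = b ^ (-(1/2 - 4*ε)) := by
      rw [hp, ← Real.rpow_natCast, ← Real.rpow_mul hb0.le]; congr 1; rw [hq]; push_cast; ring
    have e8 : X ≤ 2 * C0 * p * (√Y * √X) + b⁻¹ * Y := by
      rw [e6] at e5
      have : b * X ≤ b * (2 * C0 * p * (√Y * √X) + b⁻¹ * Y) := by
        have : b * (b⁻¹ * Y) = Y := by field_simp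
        nlinarith
      exact le_of_mul_le_mul_left this hb0
    have e9 : 2 * C0 * p * (√Y * √X) ≤ 2 * C0^2 * p^2 * Y + X / 2 := by
      have s1 := Real.sq_sqrt hY
      have s2 := Real.sq_sqrt hX
      have s3 : 0 ≤ 4 * C0^2 * p^2 * √Y^2 - 4 * C0 * p * (√Y * √X) + √X^2 := by
        nlinarith [sq_nonneg (2 * C0 * p * √Y - √X)]
      rw [s1, s2] at s3
      linarith
    have e10 : b⁻¹ * Y ≤ b ^ (-(1/2 - 4*ε)) * Y := by gcongr
    rw [e7] at e9
    nlinarith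

lemma fsi_resolvent {H : Type*} [NormedAddCommGroup H] [InnerProductSpace ℂ H]
    (x z y : H) (C0 ε β : ℝ) (hC0 : 0 < C0) (hε : 0 < ε) (hε' : ε < 1/8)
    (hβ : 1 ≤ |β|)
    (hdiss : (inner (𝕜 := ℂ) z x).re ≤ 0)
    (hc : |(inner (𝕜 := ℂ) z x).im| ≤
        C0 * ‖z‖ ^ ((3 : ℝ) / 4 + 2 * ε) * ‖x‖ ^ ((1 : ℝ) / 4 - 2 * ε) *
          (-(inner (𝕜 := ℂ) z x).re) ^ ((1 : ℝ) / 2))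
    (hy : z = (Complex.I * (β : ℂ)) • x - y) :
    ‖x‖ ≤ (2 + 4 * C0^2) * |β| ^ (-(1/2 - 4*ε)) * ‖y‖ := by
  have hin : inner ℂ z x = -(Complex.I * β) * (‖x‖:ℂ)^2 - inner ℂ y x := by
    rw [hy, inner_sub_left, inner_smul_left, inner_self_eq_norm_sq_to_K]
    simp
  have hr : (inner ℂ z x).re = - (inner ℂ y x).re := by
    rw [hin]; simp [← Complex.ofReal_pow]
  have hi : (inner ℂ z x).im = - β * ‖x‖^2 - (inner ℂ y x).im := by
    rw [hin]; simp [← Complex.ofReal_pow]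
  have hn := norm_inner_le_norm (𝕜 := ℂ) y x
  refine fsi_real_est ‖x‖ ‖y‖ |β| C0 ε ‖z‖ (-(inner ℂ z x).re) |(inner ℂ z x).im|
    (norm_nonneg _) (norm_nonneg _) hβ hC0 hε hε' (norm_nonneg _) (by linarith) ?_ ?_ ?_ hc
  · rw [hr, neg_neg]
    exact (Complex.re_le_norm _).trans hn
  · rw [hy]
    refine (norm_sub_le _ _).trans ?_
    rw [norm_smul]; simp
  · have h1 : β * ‖x‖^2 = -(inner ℂ z x).im - (inner ℂ y x).im := by rw [hi]; ring
    have h2 : |β| * ‖x‖^2 = |β * ‖x‖^2| := by rw [abs_mul, abs_of_nonneg (sq_nonneg ‖x‖)]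
    rw [h2, h1]
    refine (abs_sub _ _).trans ?_
    rw [abs_neg]
    gcongr
    exact (Complex.abs_im_le_norm _).trans hn

open MeasureTheory in
lemma fsi_generator {H : Type*} [NormedAddCommGroup H] [InnerProductSpace ℂ H] [CompleteSpace H]
    (S : ℝ → H →L[ℂ] H)
    (hSadd : ∀ t s : ℝ, 0 ≤ t → 0 ≤ s → S (t + s) = (S t).comp (S s))
    (hU : ∀ x : H, Continuous (fun t => S (max t 0) x))
    (ψ ψd : ℝ → ℂ) (hψ : ∀ t, HasDerivAt ψ (ψd t) t) (hψd : Continuous ψd)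
    (hc : HasCompactSupport ψ) (h0 : ∀ t ≤ 0, ψ t = 0) (y : H) :
    Filter.Tendsto (fun h : ℝ => h⁻¹ • (S h (∫ t, ψ t • S (max t 0) y) - ∫ t, ψ t • S (max t 0) y))
        (nhdsWithin 0 (Set.Ioi 0)) (nhds (-∫ t, ψd t • S (max t 0) y)) := by
  have hderiv : deriv ψ = ψd := funext fun t => (hψ t).deriv
  have hψc : Continuous ψ := continuous_iff_continuousAt.2 fun t => (hψ t).continuousAt
  have hC1 : ContDiff ℝ 1 ψ := by
    rw [contDiff_one_iff_deriv]
    exact ⟨fun t => (hψ t).differentiableAt, by rw [hderiv]; exact hψd⟩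
  have hneg : ContDiff ℝ 1 (fun t => ψ (-t)) := hC1.comp contDiff_neg
  have hcneg : HasCompactSupport (fun t => ψ (-t)) :=
    hc.comp_homeomorph (Homeomorph.neg ℝ)
  set u : ℝ → H := fun t => S (max t 0) y with hu
  have huc : Continuous u := hU y
  have key := hcneg.hasDerivAt_convolution_left (ContinuousLinearMap.lsmul ℝ ℂ) (μ := volume) hneg
    (huc.locallyIntegrable) 0
  have hdn : deriv (fun t => ψ (-t)) = fun t => - ψd (-t) := by
    funext t
    have : HasDerivAt (fun t => ψ (-t)) (-ψd (-t)) t := by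
      simpa [Function.comp_def] using (hψ (-t)).scomp t (hasDerivAt_neg t)
    exact this.deriv
  have F : ∀ h, convolution (fun t => ψ (-t)) u (ContinuousLinearMap.lsmul ℝ ℂ) volume h
      = ∫ t, ψ t • u (h + t) := by
    intro h
    rw [convolution_def, ← integral_neg_eq_self]
    simp
  have Fder : convolution (deriv (fun t => ψ (-t))) u (ContinuousLinearMap.lsmul ℝ ℂ) volume 0
      = - ∫ t, ψd t • u t := by
    rw [convolution_def, ← integral_neg_eq_self, hdn]
    simp [integral_neg]
  rw [Fder] at key
  have k2 := key.tendsto_slope_zero_right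
  refine k2.congr' ?_
  filter_upwards [self_mem_nhdsWithin] with h hh
  have hh' : (0:ℝ) < h := hh
  rw [F, F]
  simp only [zero_add]
  congr 2
  have hintg : Integrable (fun t => ψ t • u t) :=
    (hψc.smul huc).integrable_of_hasCompactSupport (hc.smul_right)
  rw [← ContinuousLinearMap.integral_comp_comm _ hintg]
  congr 1
  funext t
  rcases le_or_gt t 0 with ht | ht
  · simp [h0 t ht]
  · rw [map_smul]
    congr 1
    simp only [hu]
    rw [max_eq_left (by linarith), max_eq_left ht.le, hSadd h t hh'.le ht.le]
    rfl

open MeasureTheory in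
lemma fsi_op {H : Type*} [NormedAddCommGroup H] [InnerProductSpace ℂ H] [CompleteSpace H]
    (U : ℝ → H →L[ℂ] H) (hU : ∀ x : H, Continuous (fun t => U t x)) (hU1 : ∀ t, ‖U t‖ ≤ 1)
    (ψ : ℝ → ℂ) (hψ : Continuous ψ) (hc : HasCompactSupport ψ) :
    (∀ x, ‖∫ t, ψ t • U t x‖ ≤ (∫ t, ‖ψ t‖) * ‖x‖) ∧
    ∃ T : H →L[ℂ] H, ∀ x, T x = ∫ t, ψ t • U t x := by
  have hintg : ∀ x, Integrable (fun t => ψ t • U t x) := fun x =>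
    (hψ.smul (hU x)).integrable_of_hasCompactSupport (hc.smul_right)
  have hψi : Integrable ψ := hψ.integrable_of_hasCompactSupport hc
  have hb : ∀ x, ‖∫ t, ψ t • U t x‖ ≤ (∫ t, ‖ψ t‖) * ‖x‖ := by
    intro x
    rw [← integral_mul_const]
    refine norm_integral_le_of_norm_le (hψi.norm.mul_const _) (Filter.Eventually.of_forall ?_)
    intro t
    rw [norm_smul]
    gcongr
    exact (U t).le_of_opNorm_le (hU1 t) x |>.trans (by simp)
  refine ⟨hb, LinearMap.mkContinuous
    { toFun := fun x => ∫ t, ψ t • U t x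
      map_add' := ?_
      map_smul' := ?_ } (∫ t, ‖ψ t‖) hb, fun x => rfl⟩
  · intro x y
    rw [← integral_add (hintg x) (hintg y)]
    simp [smul_add]
  · intro c x
    simp only [RingHom.id_apply]
    rw [← integral_smul]
    congr 1; funext t
    rw [map_smul, smul_comm]

open MeasureTheory FourierTransform in
lemma fsi_fourier {H : Type*} [NormedAddCommGroup H] [InnerProductSpace ℂ H] [CompleteSpace H]
    (U : ℝ → H →L[ℂ] H) (hU : ∀ x : H, Continuous (fun t => U t x)) (hU1 : ∀ t, ‖U t‖ ≤ 1)
    (g : ℝ → ℂ) (hg : Continuous g) (hc : HasCompactSupport g)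
    (hdec : ∀ k : ℕ, ∃ D : ℝ, 0 ≤ D ∧ ∀ ξ : ℝ, ∀ x : H,
      ‖∫ t : ℝ, (Complex.exp (Complex.I * ((2 * Real.pi * ξ * t : ℝ) : ℂ)) * g t) • U t x‖
        ≤ D * ((1 + |ξ|) ^ (k+2))⁻¹ * ‖x‖) :
    ∃ V : ℝ → H →L[ℂ] H, ContDiff ℝ (⊤ : ℕ∞) V ∧ (∀ t x, V t x = g t • U t x) ∧
      ∀ (k : ℕ) (D : ℝ), 0 ≤ D → (∀ ξ : ℝ, ∀ x : H,
      ‖∫ t : ℝ, (Complex.exp (Complex.I * ((2 * Real.pi * ξ * t : ℝ) : ℂ)) * g t) • U t x‖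
        ≤ D * ((1 + |ξ|) ^ (k+2))⁻¹ * ‖x‖) → ∀ t,
        ‖iteratedDeriv k V t‖ ≤ D * ((2 * Real.pi) ^ k * ∫ ξ : ℝ, ((1 + |ξ|) ^ 2)⁻¹) := by
  have hcc : ∀ ξ : ℝ, Continuous
      (fun t : ℝ => Complex.exp (Complex.I * ((2 * Real.pi * ξ * t : ℝ) : ℂ)) * g t) := by
    intro ξ; fun_prop
  have hcs : ∀ ξ : ℝ, HasCompactSupport
      (fun t : ℝ => Complex.exp (Complex.I * ((2 * Real.pi * ξ * t : ℝ) : ℂ)) * g t) :=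
    fun ξ => hc.mul_left
  choose W hW using fun ξ => (fsi_op U hU hU1 _ (hcc ξ) (hcs ξ)).2
  have hintg : ∀ ξ x, Integrable (fun t : ℝ =>
      (Complex.exp (Complex.I * ((2 * Real.pi * ξ * t : ℝ) : ℂ)) * g t) • U t x) := fun ξ x =>
    ((hcc ξ).smul (hU x)).integrable_of_hasCompactSupport ((hcs ξ).smul_right)
  -- W is Lipschitz
  have htg : Integrable (fun t : ℝ => |t| * ‖g t‖) := by
    refine Continuous.integrable_of_hasCompactSupport (by fun_prop) ?_
    exact (hc.norm).mul_left
  have hWc : Continuous W := by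
    set L : ℝ := 2 * Real.pi * ∫ t, |t| * ‖g t‖ with hL
    have hL0 : 0 ≤ L := by
      have : 0 ≤ ∫ t, |t| * ‖g t‖ := integral_nonneg fun t => by positivity
      positivity
    have : LipschitzWith L.toNNReal W := by
      refine LipschitzWith.of_dist_le_mul fun ξ η => ?_
      rw [Real.coe_toNNReal _ hL0, dist_eq_norm, Real.dist_eq]
      refine ContinuousLinearMap.opNorm_le_bound _ (by positivity) fun x => ?_
      rw [sub_apply, hW, hW, ← integral_sub (hintg ξ x) (hintg η x)]
      have e : L * |ξ - η| * ‖x‖ = ∫ t, (2 * Real.pi * |ξ - η| * ‖x‖) * (|t| * ‖g t‖) := by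
        rw [integral_const_mul, hL]; ring
      rw [e]
      refine norm_integral_le_of_norm_le (htg.const_mul _) (Filter.Eventually.of_forall ?_)
      intro t
      rw [← sub_smul, ← sub_mul, norm_smul, norm_mul]
      have h1 : ‖Complex.exp (Complex.I * ((2 * Real.pi * ξ * t : ℝ) : ℂ)) -
          Complex.exp (Complex.I * ((2 * Real.pi * η * t : ℝ) : ℂ))‖
          ≤ 2 * Real.pi * |ξ - η| * |t| := by
        have : Complex.exp (Complex.I * ((2 * Real.pi * ξ * t : ℝ) : ℂ)) -
          Complex.exp (Complex.I * ((2 * Real.pi * η * t : ℝ) : ℂ)) =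
          Complex.exp (Complex.I * ((2 * Real.pi * η * t : ℝ) : ℂ)) *
           (Complex.exp (Complex.I * ((2 * Real.pi * (ξ - η) * t : ℝ) : ℂ)) - 1) := by
          rw [mul_sub, ← Complex.exp_add, mul_one]
          congr 2
          push_cast; ring
        rw [this, norm_mul, Complex.norm_exp_I_mul_ofReal, one_mul]
        refine Real.norm_exp_I_mul_ofReal_sub_one_le.trans ?_
        rw [Real.norm_eq_abs, abs_mul, abs_mul, abs_of_pos (by positivity : 0 < 2 * Real.pi)]
      have h2 : ‖U t x‖ ≤ ‖x‖ := (U t).le_of_opNorm_le (hU1 t) x |>.trans (by simp)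
      calc _ ≤ 2 * Real.pi * |ξ - η| * |t| * ‖g t‖ * ‖x‖ := by gcongr
        _ = _ := by ring
    exact this.continuous
  have hI2 : Integrable (fun ξ : ℝ => ((1 + |ξ|) ^ 2)⁻¹) := by
    have := integrable_one_add_norm (E := ℝ) (μ := volume) (r := 2) (by simp)
    refine this.congr (Filter.Eventually.of_forall fun ξ => ?_)
    simp only [Real.norm_eq_abs]
    rw [Real.rpow_neg (by positivity)]; norm_num
  have hWb : ∀ (k : ℕ) (D : ℝ), 0 ≤ D → (∀ ξ : ℝ, ∀ x : H,
      ‖∫ t : ℝ, (Complex.exp (Complex.I * ((2 * Real.pi * ξ * t : ℝ) : ℂ)) * g t) • U t x‖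
        ≤ D * ((1 + |ξ|) ^ (k+2))⁻¹ * ‖x‖) → ∀ ξ, |ξ| ^ k * ‖W ξ‖ ≤ D * ((1 + |ξ|) ^ 2)⁻¹ := by
    intro k D hD h ξ
    have h1 : ‖W ξ‖ ≤ D * ((1 + |ξ|) ^ (k+2))⁻¹ := by
      refine ContinuousLinearMap.opNorm_le_bound _ (by positivity) fun x => ?_
      rw [hW]; exact h ξ x
    calc |ξ| ^ k * ‖W ξ‖ ≤ (1 + |ξ|) ^ k * (D * ((1 + |ξ|) ^ (k+2))⁻¹) := by
          gcongr; linarith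
      _ = _ := by
        have : 0 < 1 + |ξ| := by positivity
        rw [pow_add]; field_simp
  have hWi : ∀ k : ℕ, Integrable (fun ξ : ℝ => ξ ^ k • W ξ) := by
    intro k
    obtain ⟨D, hD, h⟩ := hdec k
    refine (hI2.const_mul D).mono' (by fun_prop) (Filter.Eventually.of_forall fun ξ => ?_)
    rw [norm_smul, norm_pow, Real.norm_eq_abs]
    exact hWb k D hD h ξ
  have hW0 : Integrable W := by simpa using hWi 0
  refine ⟨𝓕 W, ?_, ?_, ?_⟩
  · refine Real.contDiff_fourier fun n _ => ?_
    refine (hWi n).norm.congr (Filter.Eventually.of_forall fun ξ => ?_)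
    simp [norm_smul]
  · intro t x
    set f : ℝ → H := fun t => g t • U t x with hf
    have hfc : Continuous f := hg.smul (hU x)
    have hfi : Integrable f := hfc.integrable_of_hasCompactSupport hc.smul_right
    have hinv : 𝓕⁻ f = fun ξ => W ξ x := by
      funext ξ
      rw [Real.fourierInv_eq', hW]
      congr 1; funext t
      rw [hf, smul_smul]
      congr 3
      simp; ring
    have hFi : Integrable (𝓕 f) := by
      have e : 𝓕 f = fun ξ => W (-ξ) x := by
        funext ξ
        have := congrFun hinv (-ξ)
        rw [Real.fourierInv_eq_fourier_neg, neg_neg] at this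
        exact this
      rw [e]
      exact ((ContinuousLinearMap.apply ℂ H x).integrable_comp hW0).comp_neg
    have key := congrFun (hfc.fourier_fourierInv_eq hfi hFi) t
    rw [hinv] at key
    change _ = f t
    rw [← key, Real.fourier_eq, Real.fourier_eq]
    rw [ContinuousLinearMap.integral_apply]
    · rfl
    · exact (Real.fourierIntegral_convergent_iff t).2 hW0
  · intro k D hD h t
    rw [Real.iteratedDeriv_fourier (N := ⊤) (fun n _ => hWi n) le_top]
    rw [Real.fourier_eq]
    rw [← integral_const_mul, ← integral_const_mul]
    refine norm_integral_le_of_norm_le ((hI2.const_mul _).const_mul _)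
      (Filter.Eventually.of_forall fun ξ => ?_)
    rw [Circle.norm_smul, norm_smul, norm_pow]
    have := hWb k D hD h ξ
    have e : ‖(-2 * (Real.pi:ℂ) * Complex.I * (ξ:ℂ))‖ = 2 * Real.pi * |ξ| := by
      simp [abs_of_pos Real.pi_pos]
    rw [e, mul_pow]
    calc _ = (2 * Real.pi)^k * (|ξ| ^ k * ‖W ξ‖) := by ring
      _ ≤ (2 * Real.pi)^k * (D * ((1 + |ξ|) ^ 2)⁻¹) := by gcongr
      _ = _ := by ring

lemma fsi_bump : ∃ g : ℕ → ℝ → ℂ, (∀ n t, HasDerivAt (g n) (g (n+1) t) t) ∧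
    (∀ n t, t ∉ Set.Icc (1/2 : ℝ) (3/2) → g n t = 0) ∧ (∀ t, |t - 1| < 1/4 → g 0 t = 1) := by
  let f : ContDiffBump (1:ℝ) := ⟨1/4, 1/2, by norm_num, by norm_num⟩
  have hf : ContDiff ℝ (⊤ : ℕ∞) f := f.contDiff
  refine ⟨fun n t => ((iteratedDeriv n f t : ℝ) : ℂ), ?_, ?_, ?_⟩
  · intro n t
    refine HasDerivAt.ofReal_comp ?_
    rw [iteratedDeriv_succ]
    refine DifferentiableAt.hasDerivAt ?_
    exact (hf.differentiable_iteratedDeriv n (by exact_mod_cast WithTop.coe_lt_top _)) t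
  · intro n t ht
    have : (f : ℝ → ℝ) =ᶠ[nhds t] fun _ => 0 := by
      have h1 : (Set.Icc (1/2 : ℝ) (3/2))ᶜ ∈ nhds t := isClosed_Icc.isOpen_compl.mem_nhds ht
      filter_upwards [h1] with s hs
      refine f.zero_of_le_dist ?_
      change (1/2 : ℝ) ≤ _
      rw [Real.dist_eq]
      by_contra h
      rw [not_le, abs_lt] at h
      exact hs ⟨by linarith, by linarith⟩
    have h2 := this.iteratedDeriv_eq n
    simp only [h2]
    simp
  · intro t ht
    have : f t = 1 := f.one_of_mem_closedBall (by
      rw [Metric.mem_closedBall, Real.dist_eq]; exact ht.le)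
    simp [this]

open MeasureTheory in
lemma fsi_decay {H : Type*} [NormedAddCommGroup H] [InnerProductSpace ℂ H] [CompleteSpace H]
    (S : ℝ → H →L[ℂ] H)
    (hSadd : ∀ t s : ℝ, 0 ≤ t → 0 ≤ s → S (t + s) = (S t).comp (S s))
    (hU : ∀ x : H, Continuous (fun t => S (max t 0) x))
    (hU1 : ∀ t, ‖S (max t 0)‖ ≤ 1)
    (domA : Set H)
    (hdom : domA = {x : H | ∃ y : H,
      Filter.Tendsto (fun h : ℝ => h⁻¹ • (S h x - x))
        (nhdsWithin 0 (Set.Ioi 0)) (nhds y)})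
    (A : H → H)
    (hA : ∀ x ∈ domA,
      Filter.Tendsto (fun h : ℝ => h⁻¹ • (S h x - x))
        (nhdsWithin 0 (Set.Ioi 0)) (nhds (A x)))
    (ε : ℝ) (hε : ε ∈ Set.Ioo (0 : ℝ) (1 / 8))
    (C₀ : ℝ) (hC₀ : 0 < C₀)
    (hdiss : ∀ x ∈ domA, (inner (𝕜 := ℂ) (A x) x).re ≤ 0)
    (hcoupling : ∀ x ∈ domA,
      |(inner (𝕜 := ℂ) (A x) x).im| ≤
        C₀ * ‖A x‖ ^ ((3 : ℝ) / 4 + 2 * ε) * ‖x‖ ^ ((1 : ℝ) / 4 - 2 * ε) *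
          (-(inner (𝕜 := ℂ) (A x) x).re) ^ ((1 : ℝ) / 2))
    (g : ℕ → ℝ → ℂ) (hg : ∀ n t, HasDerivAt (g n) (g (n+1) t) t)
    (hgs : ∀ n t, t ∉ Set.Icc (1/2 : ℝ) (3/2) → g n t = 0)
    (k n : ℕ) (hkn : (k : ℝ) + 2 ≤ (1/2 - 4*ε) * n) :
    ∃ D : ℝ, 0 ≤ D ∧ ∀ τ : ℝ, 0 < τ → ∀ ξ : ℝ, ∀ x : H,
      ‖∫ t : ℝ, (Complex.exp (Complex.I * ((2 * Real.pi * ξ * t : ℝ) : ℂ)) * g 0 (t / τ)) •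
        S (max t 0) x‖
        ≤ (D * (τ + τ * τ⁻¹ ^ n)) * ((1 + |ξ|) ^ (k+2))⁻¹ * ‖x‖ := by
  have hgc : ∀ n, Continuous (g n) := fun n =>
    continuous_iff_continuousAt.2 fun t => (hg n t).continuousAt
  set M : ℝ := 2 + 4 * C₀^2 with hM
  have hM0 : 0 < M := by positivity
  set α : ℝ := 1/2 - 4*ε with hα
  have hα0 : 0 < α := by rw [hα]; linarith [hε.2]
  set G : ℕ → ℝ := fun n => ∫ t, ‖g n t‖ with hG
  have hG0 : ∀ n, 0 ≤ G n := fun n => integral_nonneg fun t => norm_nonneg _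
  refine ⟨2^(k+2) * (G 0 + M^n * G n), mul_nonneg (by positivity)
    (add_nonneg (hG0 0) (mul_nonneg (by positivity) (hG0 n))), ?_⟩
  intro τ hτ ξ x
  set ψ : ℕ → ℝ → ℂ := fun n t =>
    Complex.exp (Complex.I * ((2 * Real.pi * ξ * t : ℝ) : ℂ)) * g n (t / τ) with hψ
  have hψc : ∀ n, Continuous (ψ n) := by
    intro n
    have := (hgc n).comp (continuous_id.div_const τ)
    have h2 : Continuous fun t : ℝ => Complex.exp (Complex.I * ((2 * Real.pi * ξ * t : ℝ) : ℂ)) := by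
      fun_prop
    exact h2.mul this
  have hψs : ∀ n t, t ∉ Set.Icc (τ/2) (3 * τ /2) → ψ n t = 0 := by
    intro n t ht
    have : t / τ ∉ Set.Icc (1/2 : ℝ) (3/2) := by
      intro h
      apply ht
      rw [Set.mem_Icc, le_div_iff₀ hτ, div_le_iff₀ hτ] at h
      exact ⟨by linarith [h.1], by linarith [h.2]⟩
    simp [hψ, hgs n _ this]
  have hψcs : ∀ n, HasCompactSupport (ψ n) := fun n =>
    HasCompactSupport.intro isCompact_Icc (fun t ht => hψs n t ht)
  have hψ0 : ∀ n, ∀ t ≤ 0, ψ n t = 0 := fun n t ht =>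
    hψs n t (fun h => by linarith [h.1])
  have hψd : ∀ n t, HasDerivAt (ψ n)
      (Complex.I * ((2 * Real.pi * ξ : ℝ) : ℂ) * ψ n t + (τ⁻¹ : ℝ) * ψ (n+1) t) t := by
    intro n t
    have h1 : HasDerivAt (fun t : ℝ => Complex.exp (Complex.I * ((2 * Real.pi * ξ * t : ℝ) : ℂ)))
        (Complex.exp (Complex.I * ((2 * Real.pi * ξ * t : ℝ) : ℂ)) *
          (Complex.I * ((2 * Real.pi * ξ : ℝ) : ℂ))) t := by
      have h3 : HasDerivAt (fun t : ℝ => 2 * Real.pi * ξ * t) (2 * Real.pi * ξ) t := by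
        simpa using (hasDerivAt_id t).const_mul (2 * Real.pi * ξ)
      exact (h3.ofReal_comp.const_mul Complex.I).cexp
    have h2 : HasDerivAt (fun t : ℝ => g n (t / τ)) ((τ⁻¹ : ℝ) * g (n+1) (t/τ)) t := by
      have h3 : HasDerivAt (fun t : ℝ => t / τ) τ⁻¹ t := by
        simpa using (hasDerivAt_id t).div_const τ
      simpa [Function.comp_def] using (hg n (t/τ)).scomp t h3
    refine (h1.fun_mul h2).congr_deriv ?_
    simp only [hψ]; ring
  set w : ℕ → H := fun n => ∫ t, ψ n t • S (max t 0) x with hw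
  have hintg : ∀ n, Integrable (fun t => ψ n t • S (max t 0) x) := fun n =>
    ((hψc n).smul (hU x)).integrable_of_hasCompactSupport ((hψcs n).smul_right)
  have hwb : ∀ n, ‖w n‖ ≤ τ * G n * ‖x‖ := by
    intro n
    refine ((fsi_op (fun t => S (max t 0)) hU hU1 (ψ n) (hψc n) (hψcs n)).1 x).trans ?_
    have : ∫ t, ‖ψ n t‖ = τ * G n := by
      simp only [hψ, norm_mul, Complex.norm_exp_I_mul_ofReal, one_mul]
      rw [Measure.integral_comp_div (fun t => ‖g n t‖) τ, abs_of_pos hτ, smul_eq_mul]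
    rw [this]
  have hstep : 1 ≤ |2 * Real.pi * ξ| → ∀ n,
      ‖w n‖ ≤ M * |2 * Real.pi * ξ| ^ (-α) * τ⁻¹ * ‖w (n+1)‖ := by
    intro hβ n
    have hlim := fsi_generator S hSadd hU (ψ n) _ (hψd n)
      (((hψc n).const_mul _).add ((hψc (n+1)).const_mul _)) (hψcs n) (hψ0 n) x
    have hwd : w n ∈ domA := by rw [hdom]; exact ⟨_, hlim⟩
    have hAw := tendsto_nhds_unique (hA _ hwd) hlim
    have e : ∫ t, (Complex.I * ((2 * Real.pi * ξ : ℝ) : ℂ) * ψ n t + (τ⁻¹ : ℝ) * ψ (n+1) t) •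
        S (max t 0) x = (Complex.I * ((2 * Real.pi * ξ : ℝ) : ℂ)) • w n +
          ((τ⁻¹ : ℝ) : ℂ) • w (n+1) := by
      have i1 := (hintg n).smul (Complex.I * ((2 * Real.pi * ξ : ℝ) : ℂ))
      have i2 := (hintg (n+1)).smul ((τ⁻¹ : ℝ) : ℂ)
      simp only [hw]
      rw [← integral_smul, ← integral_smul]
      refine Eq.trans ?_ (integral_add i1 i2)
      congr 1; funext t
      simp only [add_smul, mul_smul]
    rw [e] at hAw
    have hr := fsi_resolvent (w n) (A (w n)) (((τ⁻¹ : ℝ) : ℂ) • w (n+1)) C₀ ε (-(2 * Real.pi * ξ))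
      hC₀ hε.1 hε.2 (by rwa [abs_neg]) (hdiss _ hwd) (hcoupling _ hwd) (by
        rw [hAw]; push_cast; module)
    rw [abs_neg, norm_smul, Complex.norm_real, Real.norm_of_nonneg (by positivity)] at hr
    calc _ ≤ _ := hr
      _ = _ := by ring
  have hiter : 1 ≤ |2 * Real.pi * ξ| → ∀ n,
      ‖w 0‖ ≤ (M * |2 * Real.pi * ξ| ^ (-α) * τ⁻¹) ^ n * ‖w n‖ := by
    intro hβ n
    induction n with
    | zero => simp
    | succ n ih =>
      refine ih.trans ?_
      rw [pow_succ, mul_assoc (_ ^ n)]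
      gcongr
      exact hstep hβ n
  change ‖w 0‖ ≤ _
  have hξ : 0 < 1 + |ξ| := by positivity
  have hx0 := norm_nonneg x
  have a1 := hG0 0
  have a2 := hG0 n
  rcases lt_or_ge |ξ| 1 with h | h
  · have h1 : 1 ≤ 2^(k+2) * ((1 + |ξ|) ^ (k+2))⁻¹ := by
      rw [← div_eq_mul_inv, one_le_div (by positivity)]
      gcongr
      linarith
    calc ‖w 0‖ ≤ τ * G 0 * ‖x‖ := hwb 0
      _ ≤ (G 0 + M^n * G n) * (τ + τ * τ⁻¹ ^ n) * ‖x‖ := by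
          have : G 0 * τ ≤ (G 0 + M^n * G n) * (τ + τ * τ⁻¹ ^ n) := by
            gcongr
            · exact le_add_of_nonneg_right (by positivity)
            · exact le_add_of_nonneg_right (by positivity)
          rw [mul_comm τ]
          gcongr
      _ = (G 0 + M^n * G n) * (τ + τ * τ⁻¹ ^ n) * ‖x‖ * 1 := by ring
      _ ≤ (G 0 + M^n * G n) * (τ + τ * τ⁻¹ ^ n) * ‖x‖ * (2^(k+2) * ((1 + |ξ|) ^ (k+2))⁻¹) := by
          gcongr
      _ = _ := by ring
  · have hπ : |ξ| ≤ |2 * Real.pi * ξ| := by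
      rw [abs_mul, abs_of_pos (by positivity : 0 < 2 * Real.pi)]
      have := Real.pi_gt_three
      nlinarith [abs_nonneg ξ]
    have h0 : 0 < |ξ| := by linarith
    have h1 : (|2 * Real.pi * ξ| ^ (-α)) ^ n ≤ 2^(k+2) * ((1 + |ξ|) ^ (k+2))⁻¹ := by
      calc (|2 * Real.pi * ξ| ^ (-α)) ^ n ≤ (|ξ| ^ (-α)) ^ n := by
            refine pow_le_pow_left₀ (by positivity) ?_ n
            exact Real.rpow_le_rpow_of_nonpos h0 hπ (by linarith)
        _ = |ξ| ^ (-α * n) := by rw [Real.rpow_mul h0.le, Real.rpow_natCast]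
        _ ≤ |ξ| ^ (-((k+2 : ℕ) : ℝ)) := by
            refine Real.rpow_le_rpow_of_exponent_le h ?_
            push_cast; linarith
        _ = (|ξ| ^ (k+2))⁻¹ := by rw [Real.rpow_neg h0.le, Real.rpow_natCast]
        _ ≤ _ := by
            rw [← div_eq_mul_inv, inv_eq_one_div, div_le_div_iff₀ (by positivity) (by positivity),
              one_mul, ← mul_pow]
            gcongr
            linarith
    calc ‖w 0‖ ≤ (M * |2 * Real.pi * ξ| ^ (-α) * τ⁻¹) ^ n * (τ * G n * ‖x‖) :=
          (hiter (h.trans hπ) n).trans (by gcongr; exact hwb n)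
      _ = (M^n * G n) * (τ * τ⁻¹ ^ n) * ‖x‖ * (|2 * Real.pi * ξ| ^ (-α)) ^ n := by
          rw [mul_pow, mul_pow]; ring
      _ ≤ (G 0 + M^n * G n) * (τ + τ * τ⁻¹ ^ n) * ‖x‖ * (2^(k+2) * ((1 + |ξ|) ^ (k+2))⁻¹) := by
          gcongr
          · exact le_add_of_nonneg_left (by positivity)
          · exact le_add_of_nonneg_left (by positivity)
      _ = _ := by ring

lemma fsi_smooth {H : Type*} [NormedAddCommGroup H] [InnerProductSpace ℂ H] [CompleteSpace H]
    (S : ℝ → H →L[ℂ] H)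
    (hSadd : ∀ t s : ℝ, 0 ≤ t → 0 ≤ s → S (t + s) = (S t).comp (S s))
    (hU : ∀ x : H, Continuous (fun t => S (max t 0) x))
    (hU1 : ∀ t, ‖S (max t 0)‖ ≤ 1)
    (domA : Set H)
    (hdom : domA = {x : H | ∃ y : H,
      Filter.Tendsto (fun h : ℝ => h⁻¹ • (S h x - x))
        (nhdsWithin 0 (Set.Ioi 0)) (nhds y)})
    (A : H → H)
    (hA : ∀ x ∈ domA,
      Filter.Tendsto (fun h : ℝ => h⁻¹ • (S h x - x))
        (nhdsWithin 0 (Set.Ioi 0)) (nhds (A x)))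
    (ε : ℝ) (hε : ε ∈ Set.Ioo (0 : ℝ) (1 / 8))
    (C₀ : ℝ) (hC₀ : 0 < C₀)
    (hdiss : ∀ x ∈ domA, (inner (𝕜 := ℂ) (A x) x).re ≤ 0)
    (hcoupling : ∀ x ∈ domA,
      |(inner (𝕜 := ℂ) (A x) x).im| ≤
        C₀ * ‖A x‖ ^ ((3 : ℝ) / 4 + 2 * ε) * ‖x‖ ^ ((1 : ℝ) / 4 - 2 * ε) *
          (-(inner (𝕜 := ℂ) (A x) x).re) ^ ((1 : ℝ) / 2)) :
    (∀ t, 0 < t → ContDiffAt ℝ (⊤ : ℕ∞) S t) ∧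
    ∀ k n : ℕ, (k : ℝ) + 2 ≤ (1/2 - 4*ε) * n → ∃ D : ℝ, 0 ≤ D ∧ ∀ t, 0 < t → t ≤ 1 →
      ‖iteratedDeriv k S t‖ ≤ D * t⁻¹ ^ n := by
  obtain ⟨g, hg, hgs, hg1⟩ := fsi_bump
  have hgc : ∀ n, Continuous (g n) := fun n =>
    continuous_iff_continuousAt.2 fun t => (hg n t).continuousAt
  have hdecay := fsi_decay S hSadd hU hU1 domA hdom A hA ε hε C₀ hC₀ hdiss hcoupling g hg hgs
  have hα0 : 0 < 1/2 - 4*ε := by linarith [hε.2]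
  have hex : ∀ k : ℕ, ∃ n : ℕ, (k : ℝ) + 2 ≤ (1/2 - 4*ε) * n := by
    intro k
    obtain ⟨n, hn⟩ := exists_nat_ge (((k:ℝ) + 2) / (1/2 - 4*ε))
    refine ⟨n, ?_⟩
    rw [div_le_iff₀ hα0] at hn
    linarith
  have hV := fun (τ : ℝ) (hτ : 0 < τ) =>
    fsi_fourier (fun t => S (max t 0)) hU hU1 (fun t => g 0 (t / τ))
    ((hgc 0).comp (continuous_id.div_const τ))
    (HasCompactSupport.intro (isCompact_Icc (a := τ/2) (b := 3*τ/2)) (fun t ht => by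
      refine hgs 0 _ fun h => ht ?_
      rw [Set.mem_Icc, le_div_iff₀ hτ, div_le_iff₀ hτ] at h
      exact ⟨by linarith [h.1], by linarith [h.2]⟩))
    (fun k => by
      obtain ⟨n, hn⟩ := hex k
      obtain ⟨D, hD, h⟩ := hdecay k n hn
      exact ⟨_, mul_nonneg hD (by positivity), h τ hτ⟩)
  have hev : ∀ τ, 0 < τ → ∀ V : ℝ → H →L[ℂ] H,
      (∀ t x, V t x = g 0 (t / τ) • S (max t 0) x) → S =ᶠ[nhds τ] V := by
    intro τ hτ V h
    have : Metric.ball τ (τ/4) ∈ nhds τ := Metric.ball_mem_nhds _ (by positivity)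
    filter_upwards [this] with t ht
    rw [Metric.mem_ball, Real.dist_eq] at ht
    have h1 : |t / τ - 1| < 1/4 := by
      have : t / τ - 1 = (t - τ) / τ := by field_simp
      rw [this, abs_div, abs_of_pos hτ, div_lt_iff₀ hτ]
      linarith
    have h2 : 0 < t := by
      rw [abs_lt] at ht; linarith
    ext x
    rw [h, hg1 _ h1, one_smul, max_eq_left h2.le]
  constructor
  · intro τ hτ
    obtain ⟨V, hVs, hVe, -⟩ := hV τ hτ
    exact hVs.contDiffAt.congr_of_eventuallyEq (hev τ hτ V hVe)
  · intro k n hkn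
    obtain ⟨D, hD, h⟩ := hdecay k n hkn
    have hI : 0 ≤ ∫ ξ : ℝ, ((1 + |ξ|) ^ 2)⁻¹ :=
      MeasureTheory.integral_nonneg fun ξ => by positivity
    refine ⟨2 * D * ((2 * Real.pi) ^ k * ∫ ξ : ℝ, ((1 + |ξ|) ^ 2)⁻¹),
      mul_nonneg (by positivity) (mul_nonneg (by positivity) hI), ?_⟩
    intro τ hτ hτ1
    obtain ⟨V, hVs, hVe, hVb⟩ := hV τ hτ
    rw [(hev τ hτ V hVe).iteratedDeriv_eq k]
    refine (hVb k _ (mul_nonneg hD (by positivity)) (h τ hτ) τ).trans ?_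
    have h1 : 1 ≤ τ⁻¹ ^ n := one_le_pow₀ ((one_le_inv₀ hτ).2 hτ1)
    have h2 : τ + τ * τ⁻¹ ^ n ≤ 2 * τ⁻¹ ^ n := by nlinarith
    calc _ ≤ D * (2 * τ⁻¹ ^ n) * ((2 * Real.pi) ^ k * ∫ ξ : ℝ, ((1 + |ξ|) ^ 2)⁻¹) := by
          gcongr
      _ = _ := by ring

lemma fsi_iter_comp {E F : Type*} [NormedAddCommGroup E] [NormedSpace ℝ E] [NormedAddCommGroup F]
    [NormedSpace ℝ F] (L : E →L[ℝ] F) (f : ℝ → E) (n : ℕ) (t : ℝ)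
    (hf : ContDiffAt ℝ (⊤ : ℕ∞) f t) :
    iteratedDeriv n (fun s => L (f s)) t = L (iteratedDeriv n f t) := by
  have := L.iteratedFDeriv_comp_left hf (i := n) (by exact_mod_cast le_top)
  simp only [iteratedDeriv]
  change iteratedFDeriv ℝ n (L ∘ f) t _ = _
  rw [this]
  rfl

lemma fsi_prod {H : Type*} [NormedAddCommGroup H] [InnerProductSpace ℂ H]
    (S : ℝ → H →L[ℂ] H)
    (hSadd : ∀ t s : ℝ, 0 ≤ t → 0 ≤ s → S (t + s) = (S t).comp (S s))
    (hS : ∀ t, 0 < t → ContDiffAt ℝ (⊤ : ℕ∞) S t) :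
    (∀ (j : ℕ) (t s : ℝ), 0 ≤ t → 0 < s →
      iteratedDeriv j S (t + s) = (S t).comp (iteratedDeriv j S s)) ∧
    (∀ (i j : ℕ) (t s : ℝ), 0 < t → 0 < s →
      iteratedDeriv (i + j) S (t + s) = (iteratedDeriv i S t).comp (iteratedDeriv j S s)) := by
  have P1 : ∀ (j : ℕ) (t s : ℝ), 0 ≤ t → 0 < s →
      iteratedDeriv j S (t + s) = (S t).comp (iteratedDeriv j S s) := by
    intro j t s ht hs
    have h1 : (fun s => S (t + s)) =ᶠ[nhds s]
        fun s => ((ContinuousLinearMap.compL ℂ H H H (S t)).restrictScalars ℝ) (S s) := by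
      filter_upwards [Ioi_mem_nhds hs] with r hr
      exact hSadd t r ht (le_of_lt hr)
    have h2 := h1.iteratedDeriv_eq j
    rw [fsi_iter_comp _ S j s (hS s hs), iteratedDeriv_comp_const_add] at h2
    exact h2
  refine ⟨P1, ?_⟩
  intro i j t s ht hs
  have h1 : (fun t => iteratedDeriv j S (t + s)) =ᶠ[nhds t]
      fun t => (((ContinuousLinearMap.compL ℂ H H H).flip
        (iteratedDeriv j S s)).restrictScalars ℝ) (S t) := by
    filter_upwards [Ioi_mem_nhds ht] with r hr
    exact P1 j r s (le_of_lt hr) hs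
  have h2 := h1.iteratedDeriv_eq i
  rw [fsi_iter_comp _ S i t (hS t ht), iteratedDeriv_comp_add_const] at h2
  rw [iteratedDeriv_eq_iterate, Function.iterate_add_apply, ← iteratedDeriv_eq_iterate,
    ← iteratedDeriv_eq_iterate]
  exact h2

lemma fsi_final (L : ℕ → ℝ → ℝ) (hL : ∀ j t, 0 ≤ L j t)
    (hmono : ∀ j t s, 0 ≤ t → 0 < s → L j (t + s) ≤ L j s)
    (hmul : ∀ i j t s, 0 < t → 0 < s → L (i + j) (t + s) ≤ L i t * L j s)
    (k n : ℕ) (hk : 0 < k) (δ : ℝ) (hn : (n : ℝ) < k * δ)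
    (D : ℝ) (hD : 0 ≤ D) (hb : ∀ t, 0 < t → t ≤ 1 → L k t ≤ D * t⁻¹ ^ n)
    (a : ℝ) (ha : 0 < a) (ha1 : a ≤ 1) (θ : ℝ) (hθ : 0 < θ) :
    ∃ C > 0, ∀ N : ℕ, L N a ≤ C * θ ^ N * (N.factorial : ℝ) ^ δ := by
  have hk0 : (0:ℝ) < k := by exact_mod_cast hk
  have hδ : 0 < δ := by
    have : (0:ℝ) < k * δ := lt_of_le_of_lt (by positivity) hn
    exact (pos_iff_pos_of_mul_pos this).1 hk0
  -- power bound
  have hpow : ∀ (r m : ℕ) (s t : ℝ), 0 < s → 0 < t →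
      L (m * k + r) (m * t + s) ≤ L k t ^ m * L r s := by
    intro r m s t hs ht
    induction m with
    | zero => simp
    | succ m ih =>
      have e1 : (m + 1) * k + r = k + (m * k + r) := by ring
      have e2 : ((m + 1 : ℕ) : ℝ) * t + s = t + (m * t + s) := by push_cast; ring
      rw [e1, e2]
      refine (hmul k _ t _ ht (by positivity)).trans ?_
      rw [pow_succ', mul_assoc]
      exact mul_le_mul_of_nonneg_left ih (hL _ _)
  set B : ℝ := ∑ r ∈ Finset.range k, L r (a/2) with hB
  have hB0 : 0 ≤ B := Finset.sum_nonneg fun r _ => hL _ _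
  have hBr : ∀ r < k, L r (a/2) ≤ B := fun r hr =>
    Finset.single_le_sum (f := fun r => L r (a/2)) (fun r _ => hL _ _) (Finset.mem_range.2 hr)
  set θ₀ := min θ 1 with hθ₀
  have hθ0 : 0 < θ₀ := lt_min hθ one_pos
  set η := k * δ - n with hη
  have hη0 : 0 < η := by rw [hη]; linarith
  set e := Real.exp 1 with he
  have he0 : 0 < e := Real.exp_pos 1
  set Q : ℝ := D * (2 / a) ^ n * e ^ n / θ₀ ^ k with hQ
  have hQ0 : 0 ≤ Q := by positivity
  set C2 : ℝ := (Real.exp (Q ^ (1/η))) ^ η with hC2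
  have hC20 : 0 < C2 := by positivity
  have hQm : ∀ m : ℕ, Q ^ m ≤ C2 * (m.factorial : ℝ) ^ η := by
    intro m
    have h1 := Real.pow_div_factorial_le_exp (x := Q ^ (1/η)) (by positivity) m
    rw [div_le_iff₀ (by positivity)] at h1
    calc Q ^ m = ((Q ^ (1/η)) ^ m) ^ η := by
          rw [← Real.rpow_natCast, ← Real.rpow_natCast, ← Real.rpow_mul hQ0, ← Real.rpow_mul hQ0]
          congr 1; field_simp
      _ ≤ (Real.exp (Q ^ (1/η)) * m.factorial) ^ η := by
          refine Real.rpow_le_rpow (by positivity) h1 hη0.le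
      _ = _ := by rw [Real.mul_rpow (by positivity) (by positivity)]
  refine ⟨(B + 1) * e ^ n * C2 / θ₀ ^ k, by positivity, ?_⟩
  intro N
  set m := N / k with hm
  set r := N % k with hr
  have hrk : r < k := Nat.mod_lt _ hk
  have hN : N = m * k + r := by rw [hm, hr, mul_comm]; exact (Nat.div_add_mod N k).symm
  set t : ℝ := a / (2 * (m + 1)) with ht
  have ht0 : 0 < t := by positivity
  have hm1 : (1:ℝ) ≤ 2 * (m + 1) := by
    have : (0:ℝ) ≤ m := by positivity
    linarith
  have ht1 : t ≤ 1 := by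
    rw [ht, div_le_one (by positivity)]; linarith
  have hta : m * t + a / 2 ≤ a := by
    have : (m:ℝ) * t ≤ a / 2 := by
      rw [ht, mul_div_assoc', div_le_div_iff₀ (by positivity) (by norm_num)]
      nlinarith
    linarith
  have h1 : L N a ≤ L k t ^ m * L r (a/2) := by
    have e1 := hmono N (a - (m * t + a/2)) (m * t + a/2) (by linarith) (by positivity)
    rw [sub_add_cancel] at e1
    refine e1.trans ?_
    rw [hN]
    exact hpow r m (a/2) t (by positivity) ht0
  have h2 : L k t ^ m ≤ (D * (2 / a) ^ n) ^ m * ((m + 1 : ℝ) ^ m) ^ n := by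
    calc L k t ^ m ≤ (D * t⁻¹ ^ n) ^ m := pow_le_pow_left₀ (hL _ _) (hb t ht0 ht1) m
      _ = _ := by
        have : t⁻¹ = 2 / a * (m + 1) := by rw [ht]; field_simp
        rw [this, mul_pow (2 / a), ← mul_assoc, mul_pow _ (((m:ℝ)+1)^n), ← pow_mul (_ + 1), ← pow_mul (_ + 1), mul_comm n m]
  have h3 : ((m:ℝ) + 1) ^ m ≤ e ^ (m+1) * m.factorial := by
    have := Real.pow_div_factorial_le_exp (x := (m:ℝ) + 1) (by positivity) m
    rw [div_le_iff₀ (by positivity)] at this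
    refine this.trans (le_of_eq ?_)
    rw [he, ← Real.exp_nat_mul]; push_cast; simp
  have h4 : θ₀ ^ k * (θ₀ ^ k) ^ m ≤ θ ^ N := by
    calc θ₀ ^ k * (θ₀ ^ k) ^ m = θ₀ ^ (k + k * m) := by rw [pow_add, pow_mul]
      _ ≤ θ₀ ^ N := by
        refine pow_le_pow_of_le_one hθ0.le (min_le_right _ _) ?_
        rw [hN, mul_comm m k]; omega
      _ ≤ θ ^ N := pow_le_pow_left₀ hθ0.le (min_le_left _ _) N
  have h5 : (m.factorial : ℝ) ^ (k * δ) ≤ (N.factorial : ℝ) ^ δ := by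
    rw [Real.rpow_mul (by positivity), Real.rpow_natCast]
    refine Real.rpow_le_rpow (by positivity) ?_ hδ.le
    have d1 : m.factorial ^ k ∣ (m * k).factorial := by
      have := Nat.prod_factorial_dvd_factorial_sum (Finset.range k) (fun _ => m)
      simpa [mul_comm] using this
    have d2 : m.factorial ^ k ≤ N.factorial :=
      (Nat.le_of_dvd (Nat.factorial_pos _) d1).trans (Nat.factorial_le (by omega))
    exact_mod_cast d2
  have hf0 : (0:ℝ) < m.factorial := by positivity
  have h6 : (m.factorial : ℝ) ^ (k * δ) = (m.factorial : ℝ) ^ η * (m.factorial : ℝ) ^ n := by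
    rw [← Real.rpow_natCast _ n, ← Real.rpow_add hf0, hη]; congr 1; ring
  have h7 : D * (2 / a) ^ n * e ^ n = Q * θ₀ ^ k := by rw [hQ]; field_simp
  calc L N a ≤ L k t ^ m * L r (a/2) := h1
    _ ≤ ((D * (2 / a) ^ n) ^ m * (e ^ (m+1) * m.factorial) ^ n) * (B + 1) := by
      have := hL r (a/2)
      gcongr
      · refine h2.trans ?_
        gcongr
      · linarith [hBr r hrk]
    _ = (D * (2 / a) ^ n * e ^ n) ^ m * (m.factorial : ℝ) ^ n * (e ^ n * (B + 1)) := by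
      have : (e ^ (m+1)) ^ n = (e ^ n) ^ m * e ^ n := by
        rw [← pow_mul, ← pow_mul, ← pow_add]; ring_nf
      rw [mul_pow (e ^ (m+1)), this, mul_pow (D * (2/a)^n)]; ring
    _ = Q ^ m * ((θ₀ ^ k) ^ m * (m.factorial : ℝ) ^ n * (e ^ n * (B + 1))) := by
      rw [h7, mul_pow]; ring
    _ ≤ (C2 * (m.factorial : ℝ) ^ η) * ((θ₀ ^ k) ^ m * (m.factorial : ℝ) ^ n * (e ^ n * (B + 1))) := by
      gcongr
      exact hQm m
    _ = (B + 1) * e ^ n * C2 / θ₀ ^ k * (θ₀ ^ k * (θ₀ ^ k) ^ m) * (m.factorial : ℝ) ^ (k * δ) := by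
      rw [h6]; field_simp
    _ ≤ _ := by gcongr

/-- Abstract form of the paper's main theorem. If the generator `A` of a
contraction semigroup `S` on a complex Hilbert space is dissipative, satisfies the
interpolation-type estimate on `Im ⟪A x, x⟫`, and `iβ` lies in the resolvent set of `A`
for `|β| ≥ β₀`, then `S` is of Gevrey class `δ` for `t > 0`, for every
`δ > 2/(1 - 8ε)`. -/
theorem fsi_semigroup_gevrey_class
    {H : Type*} [NormedAddCommGroup H] [InnerProductSpace ℂ H] [CompleteSpace H]
    (S : ℝ → H →L[ℂ] H)
    (hS0 : S 0 = ContinuousLinearMap.id ℂ H)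
    (hSadd : ∀ t s : ℝ, 0 ≤ t → 0 ≤ s → S (t + s) = (S t).comp (S s))
    (hScont : ∀ x : H, ContinuousOn (fun t => S t x) (Set.Ici (0 : ℝ)))
    (hcontraction : ∀ t : ℝ, 0 ≤ t → ‖S t‖ ≤ 1)
    (domA : Set H)
    (hdom : domA = {x : H | ∃ y : H,
      Filter.Tendsto (fun h : ℝ => h⁻¹ • (S h x - x))
        (nhdsWithin 0 (Set.Ioi 0)) (nhds y)})
    (A : H → H)
    (hA : ∀ x ∈ domA,
      Filter.Tendsto (fun h : ℝ => h⁻¹ • (S h x - x))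
        (nhdsWithin 0 (Set.Ioi 0)) (nhds (A x)))
    (ε : ℝ) (hε : ε ∈ Set.Ioo (0 : ℝ) (1 / 8))
    (C₀ : ℝ) (hC₀ : 0 < C₀)
    (β₀ : ℝ) (hβ₀ : 1 ≤ β₀)
    (hdiss : ∀ x ∈ domA, (inner (𝕜 := ℂ) (A x) x).re ≤ 0)
    (hcoupling : ∀ x ∈ domA,
      |(inner (𝕜 := ℂ) (A x) x).im| ≤
        C₀ * ‖A x‖ ^ ((3 : ℝ) / 4 + 2 * ε) * ‖x‖ ^ ((1 : ℝ) / 4 - 2 * ε) *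
          (-(inner (𝕜 := ℂ) (A x) x).re) ^ ((1 : ℝ) / 2))
    (hres : ∀ β : ℝ, β₀ ≤ |β| → ∃ R : H →L[ℂ] H,
      (∀ x ∈ domA, R ((Complex.I * (β : ℂ)) • x - A x) = x) ∧
      (∀ y : H, R y ∈ domA ∧ (Complex.I * (β : ℂ)) • (R y) - A (R y) = y)) :
    ∀ δ : ℝ, 2 / (1 - 8 * ε) < δ → IsGevreyClass S δ 0 := by
  intro δ hδ
  have hmax : ∀ t : ℝ, 0 ≤ max t 0 := fun t => le_max_right _ _
  have hU : ∀ x : H, Continuous (fun t => S (max t 0) x) := fun x =>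
    (hScont x).comp_continuous (continuous_id.max continuous_const) hmax
  have hU1 : ∀ t, ‖S (max t 0)‖ ≤ 1 := fun t => hcontraction _ (hmax t)
  obtain ⟨hsm, hbd⟩ := fsi_smooth S hSadd hU hU1 domA hdom A hA ε hε C₀ hC₀ hdiss hcoupling
  obtain ⟨hP1, hP2⟩ := fsi_prod S hSadd hsm
  refine ⟨fun t ht => (hsm t ht).contDiffWithinAt, ?_⟩
  intro K hK hKc θ hθ
  -- choice of the orders
  set α : ℝ := 1/2 - 4*ε with hα
  have hα0 : 0 < α := by rw [hα]; linarith [hε.2]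
  have hδα : 1/α < δ := by
    have : 2 / (1 - 8 * ε) = 1 / α := by
      rw [hα];
      rw [div_eq_div_iff (by linarith [hε.2]) (by linarith [hε.2])]; ring
    rwa [← this]
  obtain ⟨k, hk⟩ := exists_nat_gt ((2/α + 1) / (δ - 1/α))
  have hd0 : 0 < δ - 1/α := by linarith
  have hk0 : 0 < k := by
    have : (0:ℝ) < k := lt_trans (by positivity) hk
    exact_mod_cast this
  rw [div_lt_iff₀ hd0] at hk
  set n := ⌈((k:ℝ) + 2) / α⌉₊ with hn
  have hn1 : (k:ℝ) + 2 ≤ α * n := by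
    have := Nat.le_ceil (((k:ℝ) + 2) / α)
    rw [div_le_iff₀ hα0] at this
    linarith
  have hn2 : (n:ℝ) < k * δ := by
    have h1 := Nat.ceil_lt_add_one (a := ((k:ℝ) + 2) / α) (by positivity)
    have h2 : ((k:ℝ) + 2) / α = k * (1/α) + 2/α := by field_simp
    rw [← hn] at h1
    rw [h2] at h1
    nlinarith
  obtain ⟨D, hD, hDb⟩ := hbd k n hn1
  obtain ⟨a, ha, ha1, haK⟩ : ∃ a : ℝ, 0 < a ∧ a ≤ 1 ∧ ∀ t ∈ K, a ≤ t := by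
    rcases K.eq_empty_or_nonempty with h | h
    · exact ⟨1, one_pos, le_rfl, by simp [h]⟩
    · obtain ⟨b, hb⟩ := hKc.exists_isLeast h
      exact ⟨min b 1, lt_min (hK hb.1) one_pos, min_le_right _ _,
        fun t ht => (min_le_left _ _).trans (hb.2 ht)⟩
  have hmono : ∀ (j : ℕ) (t s : ℝ), 0 ≤ t → 0 < s →
      ‖iteratedDeriv j S (t + s)‖ ≤ ‖iteratedDeriv j S s‖ := by
    intro j t s ht hs
    rw [hP1 j t s ht hs]
    refine (ContinuousLinearMap.opNorm_comp_le _ _).trans ?_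
    exact mul_le_of_le_one_left (norm_nonneg _) (hcontraction t ht)
  obtain ⟨C, hC, hfin⟩ := fsi_final (fun j t => ‖iteratedDeriv j S t‖) (fun j t => norm_nonneg _)
    hmono (fun i j t s ht hs => by
      rw [hP2 i j t s ht hs]
      exact ContinuousLinearMap.opNorm_comp_le _ _)
    k n hk0 δ hn2 D hD hDb a ha ha1 θ hθ
  refine ⟨C, hC, fun t ht N => ?_⟩
  rw [iteratedDerivWithin_of_isOpen isOpen_Ioi (hK ht)]
  have := hmono N (t - a) a (by linarith [haK t ht]) ha
  rw [sub_add_cancel] at this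
  exact this.trans (hfin N)
end
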